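/- Let λ_B ≈ 2.35698 be the unique positive real root of the polynomial x⁸ − 2x⁷ − x⁵ − x⁴ − 2x³ − 2x² − x − 1. Then every real number γ ≥ λ_B is the growth rate of a permutation class: there is a permutation class C with lim_{n→∞} |C_n|^{1/n} = γ. -/

import Mathlib

noncomputable section

open Filter

/-- Pattern containment: `τ` is contained in `σ`. -/
def PermContains {k n : ℕ} (τ : Equiv.Perm (Fin k)) (σ : Equiv.Perm (Fin n)) : Prop :=
  ∃ f : Fin k → Fin n, StrictMono f ∧ ∀ a b : Fin k, τ a < τ b ↔ σ (f a) < σ (f b)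

/-- A permutation class: a set of permutations closed downward under containment. -/
def IsPermClass (C : ∀ n : ℕ, Set (Equiv.Perm (Fin n))) : Prop :=
  ∀ (n : ℕ) (σ : Equiv.Perm (Fin n)), σ ∈ C n →
    ∀ (k : ℕ) (τ : Equiv.Perm (Fin k)), PermContains τ σ → τ ∈ C k

/-! ### Lehmer codes -/

/-- `VA k l`: the `i`-th entry of `l` is at most `k + i`. -/
def VA : ℕ → List ℕ → Prop
  | _, [] => True
  | k, x :: xs => x ≤ k ∧ VA (k + 1) xs

/-- Valid Lehmer codes. -/
abbrev Valid (l : List ℕ) : Prop := VA 0 l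

/-- Effect on the rest of a Lehmer code of deleting an entry with `t` larger entries so far. -/
def dl : ℕ → List ℕ → List ℕ
  | _, [] => []
  | t, c :: cs => if t < c then (c - 1) :: dl t cs else c :: dl (t + 1) cs

/-- One point deletion on codes. -/
def Del1 (u v : List ℕ) : Prop := ∃ A x R, u = A ++ x :: R ∧ v = A ++ dl x R

section code
variable {α : Type} [LinearOrder α]

/-- Lehmer code of `l`, when the entries of `pre` precede it. -/
def cA : List α → List α → List ℕ
  | _, [] => []
  | pre, x :: xs => pre.countP (fun z => decide (x < z)) :: cA (x :: pre) xs

lemma cA_perm (l : List α) : ∀ {p q : List α}, p.Perm q → cA p l = cA q l := by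
  induction l with
  | nil => intros; rfl
  | cons x xs ih =>
    intro p q h
    simp only [cA]
    rw [h.countP_eq, ih (h.cons x)]

lemma cA_append (l m : List α) : ∀ p : List α, cA p (l ++ m) = cA p l ++ cA (l.reverse ++ p) m := by
  induction l with
  | nil => intro p; rfl
  | cons x xs ih => intro p; simp [cA, ih]

lemma cA_length (l : List α) : ∀ p : List α, (cA p l).length = l.length := by
  induction l with
  | nil => intro p; rfl
  | cons x xs ih => intro p; simp [cA, ih]

lemma cA_VA (l : List α) : ∀ p : List α, VA p.length (cA p l) := by
  induction l with
  | nil => intro p; trivial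
  | cons x xs ih => intro p; exact ⟨List.countP_le_length, by simpa using ih (x :: p)⟩

lemma cA_del (x : α) (l : List α) : ∀ p : List α, x ∉ l →
    cA p l = dl (p.countP (fun z => decide (x < z))) (cA (x :: p) l) := by
  induction l with
  | nil => intro p _; rfl
  | cons y ys ih =>
    intro p hx
    simp only [List.mem_cons, not_or] at hx
    have h1 := ih (y :: p) hx.2
    have h2 : cA (y :: x :: p) ys = cA (x :: y :: p) ys := cA_perm _ (List.Perm.swap _ _ _)
    simp only [cA, dl, h2, List.countP_cons] at h1 ⊢
    rcases lt_or_gt_of_ne hx.1 with h | h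
    · have hle : p.countP (fun z => decide (y < z)) ≤ p.countP (fun z => decide (x < z)) := by
        apply List.countP_mono_left
        intro z _ hz
        simp only [decide_eq_true_eq] at hz ⊢
        exact h.trans hz
      simp only [h, decide_true, if_true] at h1
      simp only [not_lt.mpr h.le, decide_false, Bool.false_eq_true, if_false, add_zero]
      rw [if_neg (by omega), h1]
    · have hle : p.countP (fun z => decide (x < z)) ≤ p.countP (fun z => decide (y < z)) := by
        apply List.countP_mono_left
        intro z _ hz
        simp only [decide_eq_true_eq] at hz ⊢
        exact h.trans hz
      simp only [not_lt.mpr h.le, decide_false, Bool.false_eq_true, if_false, add_zero] at h1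
      simp only [h, decide_true, if_true]
      rw [if_pos (by omega), h1]
      simp

lemma cA_sublist {l' l : List α} (h : l'.Sublist l) : ∀ p : List α, (p ++ l).Nodup →
    Relation.ReflTransGen Del1 (cA [] (p ++ l)) (cA [] (p ++ l')) := by
  induction h with
  | slnil => intro p _; exact .refl
  | @cons l₁ l₂ x h ih =>
    intro p hp
    have hp' : (p ++ l₂).Nodup := by
      refine hp.sublist ?_
      exact List.Sublist.append_left (List.sublist_cons_self _ _) _
    refine Relation.ReflTransGen.head ?_ (ih p hp')
    have hx : x ∉ l₂ := by
      have := (List.nodup_append.mp hp).2.1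
      exact (List.nodup_cons.mp this).1
    refine ⟨cA [] p, (p.reverse ++ []).countP (fun z => decide (x < z)),
      cA (x :: (p.reverse ++ [])) l₂, ?_, ?_⟩
    · rw [cA_append]; rfl
    · rw [cA_append, ← cA_del x l₂ _ hx]
  | @cons_cons l₁ l₂ x h ih =>
    intro p hp
    have := ih (p ++ [x]) (by simpa using hp)
    simpa using this

lemma cA_map {ι β : Type} [LinearOrder β] (g : ι → α) (g' : ι → β)
    (h : ∀ a b, g a < g b ↔ g' a < g' b) (l : List ι) :
    ∀ p : List ι, cA (p.map g) (l.map g) = cA (p.map g') (l.map g') := by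
  induction l with
  | nil => intro p; rfl
  | cons x xs ih =>
    intro p
    have := ih (x :: p)
    simp only [List.map_cons, cA] at this ⊢
    rw [this, List.countP_map, List.countP_map]
    congr 2
    funext z
    simp [h]

/-- The code determines the relative order. -/
lemma cA_inj_order {β ι : Type} [LinearOrder β] (g : ι → α) (g' : ι → β) (hg : g.Injective)
    (hg' : g'.Injective) (l : List ι) : ∀ p : List ι,
    (∀ a ∈ p, ∀ b ∈ p, g a < g b ↔ g' a < g' b) →
    cA (p.map g) (l.map g) = cA (p.map g') (l.map g') → (p ++ l).Nodup →
    (∀ a ∈ p ++ l, ∀ b ∈ p ++ l, g a < g b ↔ g' a < g' b) := by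
  induction l with
  | nil => intro p hp _ _; simpa using hp
  | cons x xs ih =>
    intro p hp hc hn
    simp only [List.map_cons, cA, List.cons.injEq, List.countP_map] at hc
    obtain ⟨hc1, hc2⟩ := hc
    have hxp : x ∉ p := by
      intro h
      have := (List.nodup_append.mp hn).2.2 x h x (by simp)
      exact this rfl
    have key : ∀ a ∈ p, (g x < g a ↔ g' x < g' a) := by
      intro a ha
      have e : p.countP (fun z => decide (g a < g z)) = p.countP (fun z => decide (g' a < g' z)) := by
        apply List.countP_congr
        intro z hz
        simp [hp a ha z hz]
      have aux : ∀ {γ : Type} [LinearOrder γ] (f : ι → γ), f.Injective →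
          (f x < f a ↔ p.countP (fun z => decide (f a < f z)) < p.countP (fun z => decide (f x < f z))) := by
        intro γ _ f hf
        constructor
        · intro hlt
          have : p.countP (fun z => decide (f a < f z)) + 1 ≤
              p.countP (fun z => decide (f x < f z)) := by
            obtain ⟨s, t, rfl⟩ := List.append_of_mem ha
            simp only [List.countP_append, List.countP_cons, lt_self_iff_false, decide_false, hlt,
              decide_true, if_true]
            have : ∀ s : List ι, s.countP (fun z => decide (f a < f z)) ≤
                s.countP (fun z => decide (f x < f z)) := by
              intro s
              apply List.countP_mono_left
              intro z _ hz
              simp only [decide_eq_true_eq] at hz ⊢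
              exact hlt.trans hz
            have h1 := this s
            have h2 := this t
            simp only [Bool.false_eq_true, if_false, add_zero]
            omega
          omega
        · intro hlt
          by_contra hcon
          have hle : f a ≤ f x := not_lt.mp hcon
          have : p.countP (fun z => decide (f x < f z)) ≤ p.countP (fun z => decide (f a < f z)) := by
            apply List.countP_mono_left
            intro z _ hz
            simp only [decide_eq_true_eq] at hz ⊢
            exact hle.trans_lt hz
          omega
      have c1 : p.countP (fun z => decide (g x < g z)) = p.countP (fun z => decide (g' x < g' z)) := hc1
      rw [aux g hg, aux g' hg', e, c1]
    have key2 : ∀ a ∈ p, (g a < g x ↔ g' a < g' x) := by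
      intro a ha
      have hne : a ≠ x := fun h => hxp (h ▸ ha)
      have h1 : g a ≠ g x := fun h => hne (hg h)
      have h2 : g' a ≠ g' x := fun h => hne (hg' h)
      rw [← not_le, ← not_le, le_iff_lt_or_eq, le_iff_lt_or_eq, key a ha]
      simp [h1.symm, h2.symm]
    have := ih (x :: p) (by
      intro a ha b hb
      rcases List.mem_cons.mp ha with rfl | ha'
      · rcases List.mem_cons.mp hb with rfl | hb
        · simp
        · exact key b hb
      · rcases List.mem_cons.mp hb with rfl | hb
        · exact key2 a ha'
        · exact hp a ha' b hb) hc2 (by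
          have : (x :: p ++ xs).Perm (p ++ x :: xs) := by
            simpa using (List.perm_middle (a := x) (l₁ := p) (l₂ := xs)).symm
          exact this.nodup_iff.mpr hn)
    intro a ha b hb
    apply this a _ b _
    · simp only [List.mem_append, List.mem_cons] at ha ⊢; tauto
    · simp only [List.mem_append, List.mem_cons] at hb ⊢; tauto

end code

/-- Code of a permutation. -/
def pcode {n : ℕ} (σ : Equiv.Perm (Fin n)) : List ℕ := cA [] ((List.finRange n).map σ)

lemma pcode_length {n : ℕ} (σ : Equiv.Perm (Fin n)) : (pcode σ).length = n := by
  simp [pcode, cA_length]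

lemma pcode_valid {n : ℕ} (σ : Equiv.Perm (Fin n)) : Valid (pcode σ) := cA_VA _ []

lemma pcode_contains {k n : ℕ} {τ : Equiv.Perm (Fin k)} {σ : Equiv.Perm (Fin n)}
    (h : PermContains τ σ) : Relation.ReflTransGen Del1 (pcode σ) (pcode τ) := by
  obtain ⟨f, hf, h⟩ := h
  have e : pcode τ = cA [] (((List.finRange k).map f).map σ) := by
    have := cA_map (fun a => τ a) (fun a => σ (f a)) h (List.finRange k) []
    simpa [pcode, List.map_map, Function.comp_def] using this
  have hs : ((List.finRange k).map f).Sublist (List.finRange n) := by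
    apply List.sublist_of_subperm_of_pairwise (r := (· < ·))
    · apply List.subperm_of_subset
      · exact (List.nodup_finRange k).map hf.injective
      · intro x _; exact List.mem_finRange x
    · rw [List.pairwise_map]
      exact (List.pairwise_lt_finRange k).imp (fun hab => hf hab)
    · exact List.pairwise_lt_finRange n
  have := cA_sublist (hs.map σ) [] (by
    simpa using (List.nodup_finRange n).map σ.injective)
  rw [e]
  simpa [pcode] using this

lemma pcode_injective {n : ℕ} : Function.Injective (pcode (n := n)) := by
  intro σ τ h
  have := cA_inj_order (fun a => σ a) (fun a => τ a) σ.injective τ.injective (List.finRange n) []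
    (by simp) (by simpa [pcode] using h) (by simpa using List.nodup_finRange n)
  have h2 : ∀ a b, σ a < σ b ↔ τ a < τ b := fun a b => this a (by simp) b (by simp)
  have h3 : ∀ a b, (τ * σ⁻¹) a < (τ * σ⁻¹) b ↔ a < b := by
    intro a b
    have := h2 (σ⁻¹ a) (σ⁻¹ b)
    simpa using this.symm
  have hm : StrictMono (τ * σ⁻¹) := fun a b hab => (h3 a b).mpr hab
  have h4 : (τ * σ⁻¹ : Equiv.Perm (Fin n)) = 1 := by
    let e : Fin n ≃o Fin n := ⟨τ * σ⁻¹, by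
      intro a b
      exact hm.le_iff_le⟩
    have he : e = OrderIso.refl _ := Subsingleton.elim _ _
    ext a
    have : e a = a := by rw [he]; rfl
    exact congrArg Fin.val this
  exact (mul_inv_eq_one.mp h4).symm

/-- Valid codes of length `n`. -/
def VL (n : ℕ) : Set (List ℕ) := {l | Valid l ∧ l.length = n}

lemma VA_iff (l : List ℕ) : ∀ k, VA k l ↔ ∀ i (h : i < l.length), l[i] ≤ k + i := by
  induction l with
  | nil => intro k; simp [VA]
  | cons x xs ih =>
    intro k
    simp only [VA, ih, List.length_cons]
    constructor
    · rintro ⟨h1, h2⟩ i hi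
      rcases i with _ | i
      · simpa using h1
      · have := h2 i (by omega)
        simp only [List.getElem_cons_succ]; omega
    · intro h
      refine ⟨by simpa using h 0 (by omega), fun i hi => ?_⟩
      have := h (i+1) (by omega)
      simp only [List.getElem_cons_succ] at this; omega

lemma card_VL (n : ℕ) : (VL n).Finite ∧ (VL n).ncard = n.factorial := by
  let φ : (∀ i : Fin n, Fin (i.val + 1)) → List ℕ := fun f => List.ofFn (fun i => (f i : ℕ))
  have hinj : Function.Injective φ := by
    intro f g h
    have := List.ofFn_injective h
    funext i
    exact Fin.ext (congrFun this i)
  have hr : VL n = Set.range φ := by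
    ext l
    constructor
    · rintro ⟨h1, rfl⟩
      rw [Valid, VA_iff] at h1
      refine ⟨fun i => ⟨l[i], by have := h1 i i.2; simp; omega⟩, ?_⟩
      simp only [φ]
      exact List.ofFn_getElem
    · rintro ⟨f, rfl⟩
      refine ⟨?_, by simp [φ]⟩
      rw [Valid, VA_iff]
      intro i hi
      have hi' : i < n := by simpa [φ] using hi
      have := (f ⟨i, hi'⟩).2
      simp only [φ, List.getElem_ofFn]
      simp only at this
      omega
  rw [hr]
  refine ⟨Set.finite_range φ, ?_⟩
  rw [← Set.image_univ, Set.ncard_image_of_injective _ hinj, Set.ncard_univ, Nat.card_eq_fintype_card,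
    Fintype.card_pi]
  simp only [Fintype.card_fin]
  rw [Fin.prod_univ_eq_prod_range (fun i => i + 1) n, Finset.prod_range_add_one_eq_factorial]

lemma pcode_range (n : ℕ) : Set.range (pcode (n := n)) = VL n := by
  apply Set.eq_of_subset_of_ncard_le
  · rintro _ ⟨σ, rfl⟩
    exact ⟨pcode_valid σ, pcode_length σ⟩
  · rw [(card_VL n).2, ← Set.image_univ, Set.ncard_image_of_injective _ pcode_injective, Set.ncard_univ,
      Nat.card_eq_fintype_card, Fintype.card_perm, Fintype.card_fin]
  · exact (card_VL n).1

/-- Codes of length `n` in `P`. -/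
def lev (P : Set (List ℕ)) (n : ℕ) : Set (List ℕ) := {l | l ∈ P ∧ l.length = n}

theorem bridge (P : Set (List ℕ)) (hv : ∀ l ∈ P, Valid l) (hd : ∀ u ∈ P, ∀ v, Del1 u v → v ∈ P) :
    ∃ C : ∀ n : ℕ, Set (Equiv.Perm (Fin n)), IsPermClass C ∧
      ∀ n, Nat.card ↥(C n) = (lev P n).ncard := by
  refine ⟨fun n => {σ | pcode σ ∈ P}, ?_, ?_⟩
  · intro n σ hσ k τ hc
    have := pcode_contains hc
    have aux : ∀ {u v : List ℕ}, Relation.ReflTransGen Del1 u v → u ∈ P → v ∈ P := by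
      intro u v h hu
      induction h with
      | refl => exact hu
      | tail _ h2 ih => exact hd _ ih _ h2
    exact aux this hσ
  · intro n
    have : lev P n = pcode '' {σ : Equiv.Perm (Fin n) | pcode σ ∈ P} := by
      ext l
      constructor
      · rintro ⟨h1, h2⟩
        have : l ∈ VL n := ⟨hv _ h1, h2⟩
        rw [← pcode_range] at this
        obtain ⟨σ, rfl⟩ := this
        exact ⟨σ, h1, rfl⟩
      · rintro ⟨σ, h, rfl⟩
        exact ⟨h, pcode_length σ⟩
    rw [this, Set.ncard_image_of_injective _ pcode_injective]
    rfl

/-! ### Sum closures -/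

lemma VA_mono (l : List ℕ) : ∀ {k k' : ℕ}, k ≤ k' → VA k l → VA k' l := by
  induction l with
  | nil => intros; trivial
  | cons x xs ih =>
    intro k k' h h1
    exact ⟨h1.1.trans h, ih (by omega) h1.2⟩

lemma VA_append (a b : List ℕ) : ∀ k : ℕ, VA k (a ++ b) ↔ VA k a ∧ VA (k + a.length) b := by
  induction a with
  | nil => intro k; simp [VA]
  | cons x xs ih =>
    intro k
    simp only [List.cons_append, VA, ih, List.length_cons, and_assoc]
    rw [show k + 1 + xs.length = k + (xs.length + 1) by omega]

lemma Valid.append {a b : List ℕ} (ha : Valid a) (hb : Valid b) : Valid (a ++ b) :=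
  (VA_append a b 0).mpr ⟨ha, VA_mono b (by omega) hb⟩

lemma Valid.left {a b : List ℕ} (h : Valid (a ++ b)) : Valid a := ((VA_append a b 0).mp h).1

lemma dl_valid (l : List ℕ) : ∀ {k t : ℕ}, k ≤ t → VA k l → dl t l = l := by
  induction l with
  | nil => intros; rfl
  | cons x xs ih =>
    intro k t h h1
    have hx := h1.1
    rw [dl, if_neg (by omega), ih (by omega) h1.2]

lemma dl_append (r w : List ℕ) (hw : Valid w) : ∀ t : ℕ, dl t (r ++ w) = dl t r ++ w := by
  induction r with
  | nil => intro t; simpa [dl] using dl_valid w (Nat.zero_le t) hw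
  | cons x xs ih =>
    intro t
    simp only [List.cons_append, dl]
    split_ifs <;> simp [ih]

/-- Sum-indecomposable codes. -/
def Ind (u : List ℕ) : Prop := u ≠ [] ∧ Valid u ∧ ∀ a b, u = a ++ b → a ≠ [] → b ≠ [] → ¬ Valid b

/-- Sums of elements of `D`. -/
def PS (D : Set (List ℕ)) : Set (List ℕ) := {l | ∃ L : List (List ℕ), (∀ u ∈ L, u ∈ D) ∧ l = L.flatten}

lemma PS_nil (D : Set (List ℕ)) : [] ∈ PS D := ⟨[], by simp, rfl⟩

lemma PS_append {D : Set (List ℕ)} {a b : List ℕ} (ha : a ∈ PS D) (hb : b ∈ PS D) : a ++ b ∈ PS D := by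
  obtain ⟨L, hL, rfl⟩ := ha
  obtain ⟨M, hM, rfl⟩ := hb
  refine ⟨L ++ M, ?_, by simp⟩
  intro u hu
  rcases List.mem_append.mp hu with h | h
  exacts [hL u h, hM u h]

lemma PS_of_mem {D : Set (List ℕ)} {a : List ℕ} (ha : a ∈ D) : a ∈ PS D := ⟨[a], by simpa using ha, by simp⟩

lemma PS_cases {D : Set (List ℕ)} {l : List ℕ} (h : l ∈ PS D) :
    l = [] ∨ ∃ u ∈ D, ∃ v ∈ PS D, l = u ++ v := by
  obtain ⟨L, hL, rfl⟩ := h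
  rcases L with _ | ⟨u, L⟩
  · left; rfl
  · right
    exact ⟨u, hL u (by simp), L.flatten, ⟨L, fun v hv => hL v (by simp [hv]), rfl⟩, by simp⟩

lemma PS_mono {D E : Set (List ℕ)} (h : D ⊆ E) : PS D ⊆ PS E := by
  rintro l ⟨L, hL, rfl⟩
  exact ⟨L, fun u hu => h (hL u hu), rfl⟩

lemma PS_valid {D : Set (List ℕ)} (hD : ∀ u ∈ D, Valid u) : ∀ l ∈ PS D, Valid l := by
  rintro l ⟨L, hL, rfl⟩
  induction L with
  | nil => trivial
  | cons u L ih =>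
    rw [List.flatten_cons]
    exact Valid.append (hD u (hL u (by simp))) (ih (fun v hv => hL v (by simp [hv])))

lemma PS_del {D : Set (List ℕ)} (hD : ∀ u ∈ D, Valid u) (hc : ∀ u ∈ D, ∀ v, Del1 u v → v ∈ PS D) :
    ∀ u ∈ PS D, ∀ v, Del1 u v → v ∈ PS D := by
  rintro l ⟨L, hL, rfl⟩
  induction L with
  | nil =>
    rintro v ⟨A, x, R, h, _⟩
    simp at h
  | cons u L ih =>
    rintro v ⟨A, x, R, h, rfl⟩
    have hL' : ∀ v ∈ L, v ∈ D := fun v hv => hL v (by simp [hv])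
    have hu := hL u (by simp)
    have hLf : L.flatten ∈ PS D := ⟨L, hL', rfl⟩
    rw [List.flatten_cons, List.append_eq_append_iff] at h
    have second : ∀ as, A = u ++ as → L.flatten = as ++ x :: R → A ++ dl x R ∈ PS D := by
      rintro as rfl h2
      rw [List.append_assoc]
      exact PS_append (PS_of_mem hu) (ih hL' _ ⟨as, x, R, h2, rfl⟩)
    rcases h with ⟨as, h1, h2⟩ | ⟨bs, h1, h2⟩
    · exact second as h1 h2
    · rcases bs with _ | ⟨b, bs⟩
      · exact second [] (by simpa using h1.symm) (by simpa using h2.symm)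
      · simp only [List.cons_append, List.cons.injEq] at h2
        obtain ⟨rfl, rfl⟩ := h2
        rw [dl_append _ _ (PS_valid hD _ hLf), ← List.append_assoc]
        exact PS_append (hc u hu _ ⟨A, x, bs, h1, rfl⟩) hLf

lemma Ind_unique {u u' v v' : List ℕ} (hu : Ind u) (hu' : Ind u') (hv : Valid v) (hv' : Valid v')
    (h : u ++ v = u' ++ v') : u = u' ∧ v = v' := by
  have aux : ∀ {u u' v v' a : List ℕ}, Ind u → Ind u' → Valid v → u' = u ++ a → v = a ++ v' →
      a = [] := by
    intro u u' v v' a hu hu' hv h1 h2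
    by_contra ha
    subst h2
    exact hu'.2.2 u a h1 hu.1 ha hv.left
  rcases List.append_eq_append_iff.mp h with ⟨a, h1, h2⟩ | ⟨a, h1, h2⟩
  · have := aux hu hu' hv h1 h2
    subst this
    simp_all
  · have := aux hu' hu hv' h1 h2
    subst this
    simp_all

lemma lev_finite {P : Set (List ℕ)} (hv : ∀ l ∈ P, Valid l) (n : ℕ) : (lev P n).Finite :=
  (card_VL n).1.subset (fun l hl => ⟨hv l hl.1, hl.2⟩)

/-- Growth-rate predicate used for the induction. -/
def GR (γ : ℝ) : Prop := ∃ P : Set (List ℕ), (∀ l ∈ P, Valid l) ∧ (∀ u ∈ P, ∀ v, Del1 u v → v ∈ P) ∧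
  ∀ ε : ℝ, 0 < ε → ε < γ → ∃ K : ℝ, 0 < K ∧ ∀ n : ℕ,
    ((lev P n).ncard : ℝ) ≤ K * (γ + ε) ^ n ∧ (γ - ε) ^ n ≤ K * (lev P n).ncard

/-- Total weight of a set of codes. -/
def W (y : ℝ) (X : Set (List ℕ)) : ENNReal := ∑' u : X, ENNReal.ofReal y ^ u.1.length

lemma W_lev (y : ℝ) {P : Set (List ℕ)} (hv : ∀ l ∈ P, Valid l) (n : ℕ) :
    W y (lev P n) = (lev P n).ncard * ENNReal.ofReal y ^ n := by
  have hf := lev_finite hv n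
  unfold W
  have : ∀ u : lev P n, ENNReal.ofReal y ^ u.1.length = ENNReal.ofReal y ^ n := by
    intro u; rw [u.2.2]
  simp_rw [this]
  rw [ENNReal.tsum_const]
  congr 1
  have := hf.encard_eq_coe_toFinset_card
  rw [Set.ncard_eq_toFinset_card _ hf]
  rw [ENat.card_coe_set_eq, this]
  simp

theorem sum_closure_GR (D : Set (List ℕ)) (hD : ∀ u ∈ D, Ind u) (h0 : [0] ∈ D)
    (hc : ∀ u ∈ D, ∀ v, Del1 u v → v ∈ PS D) (y : ℝ) (hy : 0 < y) (hW : W y D = 1) : GR (1 / y) := by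
  have hV : ∀ l ∈ PS D, Valid l := PS_valid (fun u hu => (hD u hu).2.1)
  refine ⟨PS D, hV, PS_del (fun u hu => (hD u hu).2.1) hc, ?_⟩
  set q := ENNReal.ofReal y with hq
  set c : ℕ → ℕ := fun n => (lev (PS D) n).ncard with hcdef
  have hfin := lev_finite hV
  have hy1 : y ≤ 1 := by
    have : q ^ 1 ≤ W y D := by
      exact ENNReal.le_tsum (f := fun u : D => q ^ u.1.length) ⟨[0], h0⟩
    rw [hW, pow_one, hq] at this
    simpa using this
  -- upper bound
  have hup : ∀ n, (c n : ENNReal) * q ^ n ≤ 1 := by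
    intro n
    induction n using Nat.strong_induction_on with
    | _ n ih =>
    rcases Nat.eq_zero_or_pos n with rfl | hn
    · have : c 0 ≤ 1 := by
        have hs : lev (PS D) 0 ⊆ {[]} := by
          rintro l ⟨_, hl⟩
          simpa using hl
        calc c 0 ≤ ({[]} : Set (List ℕ)).ncard := Set.ncard_le_ncard hs
          _ = 1 := Set.ncard_singleton _
      simpa using this
    · rw [hcdef]
      rw [← W_lev y hV n]
      let S := Σ u : D, {v : List ℕ // v ∈ PS D ∧ u.1.length + v.length = n}
      let f : S → lev (PS D) n := fun p => ⟨p.1.1 ++ p.2.1, PS_append (PS_of_mem p.1.2) p.2.2.1, by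
        simpa using p.2.2.2⟩
      have hf : Function.Surjective f := by
        rintro ⟨l, hl, hln⟩
        rcases PS_cases hl with rfl | ⟨u, hu, v, hv, rfl⟩
        · simp at hln; omega
        · exact ⟨⟨⟨u, hu⟩, ⟨v, hv, by simpa using hln⟩⟩, rfl⟩
      calc W y (lev (PS D) n) ≤ ∑' p : S, q ^ (f p).1.length :=
            ENNReal.tsum_le_tsum_comp_of_surjective hf _
        _ = ∑' u : D, ∑' v : {v : List ℕ // v ∈ PS D ∧ u.1.length + v.length = n},
              q ^ u.1.length * q ^ v.1.length := by
            rw [ENNReal.tsum_sigma']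
            simp only [f, List.length_append, pow_add]
        _ ≤ ∑' u : D, q ^ u.1.length := by
            apply ENNReal.tsum_le_tsum
            intro u
            rw [ENNReal.tsum_mul_left]
            have hu0 : 0 < u.1.length := List.length_pos_iff.mpr (hD u.1 u.2).1
            by_cases hle : u.1.length ≤ n
            · have e : {v : List ℕ | v ∈ PS D ∧ u.1.length + v.length = n} = lev (PS D) (n - u.1.length) := by
                ext v
                simp only [lev, Set.mem_ofPred_eq]
                constructor
                · rintro ⟨a, b⟩; exact ⟨a, by omega⟩
                · rintro ⟨a, b⟩; exact ⟨a, by omega⟩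
              have : ∑' v : {v : List ℕ // v ∈ PS D ∧ u.1.length + v.length = n}, q ^ v.1.length =
                  W y (lev (PS D) (n - u.1.length)) := by
                rw [← e]; rfl
              rw [this, W_lev y hV]
              calc _ ≤ q ^ u.1.length * 1 := by
                    gcongr
                    exact ih _ (by omega)
                _ = _ := by simp
            · have : IsEmpty {v : List ℕ // v ∈ PS D ∧ u.1.length + v.length = n} :=
                ⟨fun v => by have := v.2.2; omega⟩
              simp
        _ = 1 := hW
  -- divergence
  have hU : W y (PS D) = ⊤ := by
    by_contra hne
    let f : Unit ⊕ (D × PS D) → PS D := fun o => match o with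
      | .inl _ => ⟨[], PS_nil D⟩
      | .inr p => ⟨p.1.1 ++ p.2.1, PS_append (PS_of_mem p.1.2) p.2.2⟩
    have hf : Function.Injective f := by
      rintro (_ | ⟨u, v⟩) (_ | ⟨u', v'⟩) h
      · rfl
      · have := congrArg Subtype.val h
        have h2 := (hD u'.1 u'.2).1
        simp [f] at this
        exact absurd this.1 h2
      · have := congrArg Subtype.val h
        have h2 := (hD u.1 u.2).1
        simp [f] at this
        exact absurd this.1 h2
      · have := congrArg Subtype.val h
        obtain ⟨h1, h2⟩ := Ind_unique (hD u.1 u.2) (hD u'.1 u'.2) (hV _ v.2) (hV _ v'.2) this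
        rw [Subtype.ext h1, Subtype.ext h2]
    have h1 : ∑' o : Unit ⊕ (D × PS D), q ^ (f o).1.length ≤ W y (PS D) :=
      ENNReal.tsum_comp_le_tsum_of_injective hf (fun u : PS D => q ^ u.1.length)
    have h2 : ∑' o : Unit ⊕ (D × PS D), q ^ (f o).1.length = 1 + W y (PS D) := by
      rw [Summable.tsum_sum ENNReal.summable ENNReal.summable]
      congr 1
      · simp [f]
      · simp only [f, List.length_append, pow_add]
        rw [ENNReal.tsum_prod']
        simp only [ENNReal.tsum_mul_left, ENNReal.tsum_mul_right]
        change W y D * W y (PS D) = _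
        rw [hW, one_mul]
    rw [h2] at h1
    have := ENNReal.lt_add_right hne one_ne_zero
    rw [add_comm] at this
    exact absurd h1 (not_le.mpr this)
  have hU2 : ∑' n, (c n : ENNReal) * q ^ n = ⊤ := by
    rw [← hU]
    let f : (Σ n, lev (PS D) n) → PS D := fun p => ⟨p.2.1, p.2.2.1⟩
    apply le_antisymm (by rw [hU]; exact le_top)
    have hf : Function.Surjective f := by
      rintro ⟨l, hl⟩
      exact ⟨⟨l.length, ⟨l, hl, rfl⟩⟩, rfl⟩
    calc W y (PS D) ≤ ∑' p : (Σ n, lev (PS D) n), q ^ (f p).1.length :=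
          ENNReal.tsum_le_tsum_comp_of_surjective hf _
      _ = ∑' n, W y (lev (PS D) n) := by
          rw [ENNReal.tsum_sigma']; rfl
      _ = _ := by simp_rw [W_lev y hV]; rfl
  -- real sequences
  set a : ℕ → ℝ := fun n => c n * y ^ n with ha
  have ha0 : ∀ n, 0 ≤ a n := fun n => by positivity
  have hofa : ∀ n, (c n : ENNReal) * q ^ n = ENNReal.ofReal (a n) := by
    intro n
    rw [ha, ENNReal.ofReal_mul (by positivity), ENNReal.ofReal_pow hy.le, ENNReal.ofReal_natCast]
  have hcmul : ∀ m n, c m * c n ≤ c (m + n) := by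
    intro m n
    rw [hcdef]
    simp only
    rw [← Set.ncard_prod]
    apply Set.ncard_le_ncard_of_injOn (fun p : List ℕ × List ℕ => p.1 ++ p.2) (ht := hfin _)
    · rintro ⟨u, v⟩ ⟨hu, hv⟩
      exact ⟨PS_append hu.1 hv.1, by simp [hu.2, hv.2]⟩
    · rintro ⟨u, v⟩ ⟨hu, hv⟩ ⟨u', v'⟩ ⟨hu', hv'⟩ h
      exact Prod.ext_iff.mpr (List.append_inj h (by rw [hu.2, hu'.2]))
  have hamul : ∀ m n, a m * a n ≤ a (m + n) := by
    intro m n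
    have : (c m : ℝ) * c n ≤ c (m + n) := by exact_mod_cast hcmul m n
    calc a m * a n = (c m * c n) * y ^ (m + n) := by simp only [ha, pow_add]; ring
      _ ≤ c (m + n) * y ^ (m + n) := by gcongr
  have hc0 : 1 ≤ c 0 := by
    have : (lev (PS D) 0).Nonempty := ⟨[], PS_nil D, rfl⟩
    exact Nat.succ_le_of_lt ((Set.ncard_pos (hfin 0)).mpr this)
  have hc1 : 1 ≤ c 1 := by
    have : (lev (PS D) 1).Nonempty := ⟨[0], PS_of_mem h0, rfl⟩
    exact Nat.succ_le_of_lt ((Set.ncard_pos (hfin 1)).mpr this)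
  have ha1 : y ≤ a 1 := by
    have : (1:ℝ) ≤ c 1 := by exact_mod_cast hc1
    simp only [ha, pow_one]; nlinarith
  have hapow : ∀ r, y ^ r ≤ a r := by
    intro r
    induction r with
    | zero => simpa [ha] using hc0
    | succ r ih =>
      calc y ^ (r + 1) = y ^ r * y := pow_succ _ _
        _ ≤ a r * a 1 := by gcongr
        _ ≤ _ := hamul _ _
  intro ε hε hεγ
  set δ : ℝ := (1 / y - ε) * y with hδ
  have hδ0 : 0 < δ := mul_pos (by linarith) hy
  have hδ1 : δ < 1 := by
    rw [hδ, sub_mul, one_div, inv_mul_cancel₀ hy.ne']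
    nlinarith
  obtain ⟨n0, hn0, hn⟩ : ∃ n0, 0 < n0 ∧ δ ^ n0 ≤ a n0 := by
    by_contra hcon
    push Not at hcon
    have : ∑' n, (c n : ENNReal) * q ^ n ≤ ENNReal.ofReal (a 0) + ∑' n, ENNReal.ofReal δ ^ (n) := by
      rw [tsum_eq_zero_add' ENNReal.summable]
      gcongr ?_ + ?_
      · rw [hofa]
      · calc ∑' n, (c (n + 1) : ENNReal) * q ^ (n + 1) ≤ ∑' n, ENNReal.ofReal δ ^ (n + 1) := by
              apply ENNReal.tsum_le_tsum
              intro n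
              rw [hofa, ← ENNReal.ofReal_pow hδ0.le]
              exact ENNReal.ofReal_le_ofReal (hcon _ (by omega)).le
          _ ≤ _ := ENNReal.tsum_comp_le_tsum_of_injective (add_left_injective 1) (fun n => ENNReal.ofReal δ ^ n)
    rw [hU2, ENNReal.tsum_geometric, top_le_iff] at this
    have h2 : (1 - ENNReal.ofReal δ)⁻¹ ≠ ⊤ := by
      rw [Ne, ENNReal.inv_eq_top, tsub_eq_zero_iff_le, not_le]
      rw [ENNReal.ofReal_lt_one]; exact hδ1
    rw [ENNReal.add_eq_top] at this
    rcases this with h | h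
    · exact ENNReal.ofReal_ne_top h
    · exact h2 h
  have hlow : ∀ n, δ ^ n * y ^ n0 ≤ a n := by
    intro n
    have hqn : ∀ k, δ ^ (n0 * k) ≤ a (n0 * k) := by
      intro k
      induction k with
      | zero => simpa [ha] using hc0
      | succ k ih =>
        calc δ ^ (n0 * (k + 1)) = δ ^ (n0 * k) * δ ^ n0 := by rw [← pow_add]; ring_nf
          _ ≤ a (n0 * k) * a n0 := by gcongr
          _ ≤ a (n0 * k + n0) := hamul _ _
    have hdm := Nat.div_add_mod n n0
    have hlt := Nat.mod_lt n hn0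
    calc δ ^ n * y ^ n0 ≤ δ ^ (n0 * (n / n0)) * y ^ (n % n0) := by
          gcongr ?_ * ?_
          · exact pow_le_pow_of_le_one hδ0.le hδ1.le (by omega)
          · exact pow_le_pow_of_le_one hy.le hy1 hlt.le
      _ ≤ a (n0 * (n / n0)) * a (n % n0) := by gcongr; exacts [hqn _, hapow _]
      _ ≤ a n := by
          have := hamul (n0 * (n / n0)) (n % n0)
          rwa [hdm] at this
  have hK1 : 1 ≤ (y ^ n0)⁻¹ := by
    rw [one_le_inv₀ (by positivity)]
    exact pow_le_one₀ hy.le hy1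
  refine ⟨(y ^ n0)⁻¹, by positivity, fun n => ⟨?_, ?_⟩⟩
  · have h1 : a n ≤ 1 := by
      have := hup n
      rw [hofa] at this
      simpa using this
    have h2 : (c n : ℝ) ≤ (1 / y) ^ n := by
      rw [div_pow, one_pow, le_div_iff₀ (by positivity)]
      exact h1
    calc (c n : ℝ) ≤ (1 / y) ^ n := h2
      _ ≤ (1 / y + ε) ^ n := by gcongr; linarith
      _ ≤ (y ^ n0)⁻¹ * (1 / y + ε) ^ n := le_mul_of_one_le_left (by positivity) hK1
  · have h1 := hlow n
    have h2 : (1 / y - ε) ^ n * y ^ n * y ^ n0 ≤ c n * y ^ n := by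
      rw [← mul_pow]; exact h1
    have h3 : (1 / y - ε) ^ n * y ^ n0 ≤ c n := by
      have : ((1 / y - ε) ^ n * y ^ n0) * y ^ n ≤ c n * y ^ n := by linarith
      exact le_of_mul_le_mul_right this (by positivity)
    calc (1 / y - ε) ^ n = (y ^ n0)⁻¹ * ((1 / y - ε) ^ n * y ^ n0) := by
          field_simp
      _ ≤ _ := by gcongr

/-- From the induction predicate to the theorem. -/
theorem GR_final (γ : ℝ) (hγ : 0 < γ) (h : GR γ) :
    ∃ C : ∀ n : ℕ, Set (Equiv.Perm (Fin n)), IsPermClass C ∧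
      Tendsto (fun n : ℕ => (Nat.card ↥(C n) : ℝ) ^ (1 / (n : ℝ))) atTop (nhds γ) := by
  obtain ⟨P, hv, hd, hg⟩ := h
  obtain ⟨C, hC, hcard⟩ := bridge P hv hd
  refine ⟨C, hC, ?_⟩
  simp_rw [hcard]
  have hroot : ∀ K : ℝ, 0 < K → Tendsto (fun n : ℕ => K ^ (1 / (n : ℝ))) atTop (nhds 1) := by
    intro K hK
    have h1 : Tendsto (fun n : ℕ => 1 / (n : ℝ)) atTop (nhds 0) := tendsto_one_div_atTop_nhds_zero_nat
    have := (Real.continuousAt_const_rpow hK.ne' (b := 0)).tendsto.comp h1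
    simpa [Function.comp_def] using this
  rw [Metric.tendsto_atTop']
  intro η hη
  set ε := min (η / 4) (γ / 2) with hεd
  have hε : 0 < ε := by positivity
  have hε1 : ε < γ := lt_of_le_of_lt (min_le_right _ _) (by linarith)
  have hε2 : ε ≤ η / 4 := min_le_left _ _
  obtain ⟨K, hK, hb⟩ := hg ε hε hε1
  have t1 : Tendsto (fun n : ℕ => K ^ (1 / (n : ℝ)) * (γ + ε)) atTop (nhds (1 * (γ + ε))) :=
    (hroot K hK).mul_const _
  have t2 : Tendsto (fun n : ℕ => (K⁻¹) ^ (1 / (n : ℝ)) * (γ - ε)) atTop (nhds (1 * (γ - ε))) :=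
    (hroot K⁻¹ (by positivity)).mul_const _
  have e1 := t1.eventually (gt_mem_nhds (show 1 * (γ + ε) < γ + η by linarith))
  have e2 := t2.eventually (lt_mem_nhds (show γ - η < 1 * (γ - ε) by linarith))
  obtain ⟨N, hN⟩ := Filter.eventually_atTop.mp (e1.and e2)
  refine ⟨N, fun n hn => ?_⟩
  obtain ⟨h1, h2⟩ := hN n hn.le
  have hn0 : n ≠ 0 := by omega
  obtain ⟨b1, b2⟩ := hb n
  have r1 : ((lev P n).ncard : ℝ) ^ (1 / (n : ℝ)) ≤ K ^ (1 / (n : ℝ)) * (γ + ε) := by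
    calc _ ≤ (K * (γ + ε) ^ n) ^ (1 / (n : ℝ)) := Real.rpow_le_rpow (by positivity) b1 (by positivity)
      _ = _ := by
        rw [Real.mul_rpow hK.le (by positivity), one_div, Real.pow_rpow_inv_natCast (by positivity) hn0]
  have r2 : (K⁻¹) ^ (1 / (n : ℝ)) * (γ - ε) ≤ ((lev P n).ncard : ℝ) ^ (1 / (n : ℝ)) := by
    have hp : 0 ≤ γ - ε := by linarith
    have : K⁻¹ * (γ - ε) ^ n ≤ (lev P n).ncard := by
      rw [inv_mul_le_iff₀ hK]; exact b2
    calc _ = (K⁻¹ * (γ - ε) ^ n) ^ (1 / (n : ℝ)) := by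
          rw [Real.mul_rpow (by positivity) (by positivity), one_div,
            Real.pow_rpow_inv_natCast hp hn0]
      _ ≤ _ := Real.rpow_le_rpow (by positivity) this (by positivity)
  rw [Real.dist_eq, abs_lt]
  constructor <;> linarith

/-! ### Adding one to a growth rate -/

/-- Nonincreasing lists with entries at most `k`. -/
def DB : ℕ → List ℕ → Prop
  | _, [] => True
  | k, x :: xs => x ≤ k ∧ DB x xs

lemma DB_mono {l : List ℕ} {k k' : ℕ} (h : k ≤ k') (h1 : DB k l) : DB k' l := by
  cases l with
  | nil => trivial
  | cons x xs => exact ⟨h1.1.trans h, h1.2⟩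

lemma DB_VA (l : List ℕ) : ∀ {k : ℕ}, DB k l → VA k l := by
  induction l with
  | nil => intros; trivial
  | cons x xs ih => intro k h; exact ⟨h.1, VA_mono _ (by have := h.1; omega) (ih h.2)⟩

lemma DB_dl_eq (l : List ℕ) : ∀ {k t : ℕ}, k ≤ t → DB k l → dl t l = l := fun h h1 =>
  dl_valid _ h (DB_VA _ h1)

lemma DB_dl (l : List ℕ) : ∀ {k t : ℕ}, t ≤ k → DB (k + 1) l → DB k (dl t l) := by
  induction l with
  | nil => intros; trivial
  | cons x xs ih =>
    intro k t h h1
    have hx := h1.1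
    rw [dl]
    split_ifs with hc
    · refine ⟨by omega, ih (by omega) ?_⟩
      have := h1.2
      rwa [show x - 1 + 1 = x by omega]
    · refine ⟨by omega, ?_⟩
      rw [DB_dl_eq xs (by omega) h1.2]
      exact h1.2

lemma DB_del (l : List ℕ) : ∀ {k : ℕ} {A R : List ℕ} {x : ℕ}, DB k l → l = A ++ x :: R →
    DB k (A ++ dl x R) := by
  induction l with
  | nil => intro k A R x _ h; simp at h
  | cons z zs ih =>
    intro k A R x h e
    rcases A with _ | ⟨a, A⟩
    · simp only [List.nil_append, List.cons.injEq] at e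
      obtain ⟨rfl, rfl⟩ := e
      rw [List.nil_append, DB_dl_eq zs le_rfl h.2]
      exact DB_mono h.1 h.2
    · simp only [List.cons_append, List.cons.injEq] at e
      obtain ⟨rfl, e⟩ := e
      exact ⟨h.1, ih h.2 e⟩

lemma dl_append' (r w : List ℕ) : ∀ t : ℕ, ∃ t', t' ≤ t + r.length ∧ dl t (r ++ w) = dl t r ++ dl t' w := by
  induction r with
  | nil => intro t; exact ⟨t, by simp, by simp [dl]⟩
  | cons x xs ih =>
    intro t
    simp only [List.cons_append, dl]
    split_ifs
    · obtain ⟨t', h1, h2⟩ := ih t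
      exact ⟨t', by simp; omega, by simp [h2]⟩
    · obtain ⟨t', h1, h2⟩ := ih (t + 1)
      exact ⟨t', by simp; omega, by simp [h2]⟩

lemma dl_length (l : List ℕ) : ∀ t : ℕ, (dl t l).length = l.length := by
  induction l with
  | nil => intro t; rfl
  | cons x xs ih => intro t; rw [dl]; split_ifs <;> simp [ih]

/-- Nonincreasing lists of length `m` bounded by `k`. -/
def DS (m k : ℕ) : Set (List ℕ) := {l | DB k l ∧ l.length = m}

lemma DS_card (s : ℕ) : ∀ m k : ℕ, m + k = s → (DS m k).Finite ∧ (DS m k).ncard = (m + k).choose k := by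
  induction s with
  | zero =>
    intro m k h
    have hm : m = 0 := by omega
    have hk : k = 0 := by omega
    subst hm hk
    have : DS 0 0 = {[]} := by
      ext l
      simp only [DS, Set.mem_ofPred_eq, Set.mem_singleton_iff, List.length_eq_zero_iff]
      constructor
      · exact fun h => h.2
      · rintro rfl; exact ⟨trivial, rfl⟩
    rw [this]; simp
  | succ s ih =>
    intro m k h
    rcases m with _ | m
    · have : DS 0 k = {[]} := by
        ext l
        simp only [DS, Set.mem_ofPred_eq, Set.mem_singleton_iff, List.length_eq_zero_iff]
        constructor
        · exact fun h => h.2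
        · rintro rfl; exact ⟨trivial, rfl⟩
      rw [this]; simp
    · rcases k with _ | k
      · obtain ⟨h1, h2⟩ := ih m 0 (by omega)
        have : DS (m + 1) 0 = (List.cons 0) '' DS m 0 := by
          ext l
          constructor
          · rintro ⟨a, b⟩
            rcases l with _ | ⟨x, xs⟩
            · simp at b
            · have hx : x = 0 := by have := a.1; omega
              subst hx
              exact ⟨xs, ⟨a.2, by simpa using b⟩, rfl⟩
          · rintro ⟨xs, ⟨a, b⟩, rfl⟩
            exact ⟨⟨le_rfl, a⟩, by simpa using b⟩
        rw [this]
        refine ⟨h1.image _, ?_⟩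
        rw [Set.ncard_image_of_injective _ (List.cons_injective), h2]
        simp
      · obtain ⟨h1, h2⟩ := ih m (k + 1) (by omega)
        obtain ⟨h3, h4⟩ := ih (m + 1) k (by omega)
        have : DS (m + 1) (k + 1) = (List.cons (k + 1)) '' DS m (k + 1) ∪ DS (m + 1) k := by
          ext l
          constructor
          · rintro ⟨a, b⟩
            rcases l with _ | ⟨x, xs⟩
            · simp at b
            · by_cases hx : x = k + 1
              · subst hx
                left
                exact ⟨xs, ⟨a.2, by simpa using b⟩, rfl⟩
              · right
                exact ⟨⟨by have := a.1; omega, a.2⟩, b⟩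
          · rintro (⟨xs, ⟨a, b⟩, rfl⟩ | ⟨a, b⟩)
            · exact ⟨⟨le_rfl, a⟩, by simpa using b⟩
            · exact ⟨DB_mono (by omega) a, b⟩
        have hdis : Disjoint ((List.cons (k + 1)) '' DS m (k + 1)) (DS (m + 1) k) := by
          rw [Set.disjoint_left]
          rintro _ ⟨xs, _, rfl⟩ ⟨a, _⟩
          have := a.1
          omega
        rw [this]
        refine ⟨(h1.image _).union h3, ?_⟩
        rw [Set.ncard_union_eq hdis (h1.image _) h3, Set.ncard_image_of_injective _ (List.cons_injective),
          h2, h4]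
        rw [show m + 1 + (k + 1) = (m + k + 1) + 1 by ring, Nat.choose_succ_succ,
          show m + (k + 1) = m + k + 1 by ring, show m + 1 + k = m + k + 1 by ring, add_comm]

theorem GR_add_one (γ : ℝ) (hγ : 0 < γ) (h : GR γ) : GR (γ + 1) := by
  obtain ⟨P, hv, hd, hg⟩ := h
  set Q : Set (List ℕ) := {l | ∃ A ∈ P, ∃ B, DB A.length B ∧ l = A ++ B} with hQ
  have hQv : ∀ l ∈ Q, Valid l := by
    rintro l ⟨A, hA, B, hB, rfl⟩
    exact (VA_append A B 0).mpr ⟨hv A hA, by simpa using DB_VA B hB⟩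
  refine ⟨Q, hQv, ?_, ?_⟩
  · rintro l ⟨A, hA, B, hB, rfl⟩ v ⟨A', x, R, e, rfl⟩
    have second : ∀ as, A' = A ++ as → B = as ++ x :: R → A' ++ dl x R ∈ Q := by
      rintro as rfl h2
      exact ⟨A, hA, as ++ dl x R, DB_del B hB h2, by simp⟩
    rcases List.append_eq_append_iff.mp e with ⟨as, h1, h2⟩ | ⟨bs, h1, h2⟩
    · exact second as h1 h2
    · rcases bs with _ | ⟨b, bs⟩
      · exact second [] (by simpa using h1.symm) (by simpa using h2.symm)
      · simp only [List.cons_append, List.cons.injEq] at h2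
        obtain ⟨rfl, rfl⟩ := h2
        obtain ⟨t', ht, he⟩ := dl_append' bs B x
        have hx : x ≤ A'.length := by
          have := hv A hA
          rw [h1, Valid, VA_append] at this
          simpa using this.2.1
        refine ⟨A' ++ dl x bs, hd A hA _ ⟨A', x, bs, h1, rfl⟩, dl t' B, ?_, ?_⟩
        · rw [List.length_append, dl_length]
          apply DB_dl _ (by omega)
          have : A.length = A'.length + bs.length + 1 := by rw [h1]; simp; omega
          rwa [← this]
        · rw [he, List.append_assoc]
  · set c : ℕ → ℕ := fun n => (lev P n).ncard with hc
    set d : ℕ → ℕ := fun n => (lev Q n).ncard with hdd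
    have hlow : ∀ n k, k ≤ n → c k * n.choose k ≤ d n := by
      intro n k hk
      have h1 := DS_card _ (n - k) k rfl
      have : n.choose k = (DS (n - k) k).ncard := by rw [h1.2]; congr 1; omega
      rw [this, hc, hdd]
      simp only
      rw [← Set.ncard_prod]
      apply Set.ncard_le_ncard_of_injOn (fun p : List ℕ × List ℕ => p.1 ++ p.2) (ht := lev_finite hQv n)
      · rintro ⟨u, v⟩ ⟨hu, hv⟩
        refine ⟨⟨u, hu.1, v, ?_, rfl⟩, ?_⟩
        · rw [hu.2]; exact hv.1
        · have a := hu.2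
          have b := hv.2
          simp only at a b
          simp only [List.length_append]; omega
      · rintro ⟨u, v⟩ ⟨hu, hv⟩ ⟨u', v'⟩ ⟨hu', hv'⟩ h
        exact Prod.ext_iff.mpr (List.append_inj h (by rw [hu.2, hu'.2]))
    have hupp : ∀ n, d n ≤ ∑ k ∈ Finset.range (n + 1), c k * n.choose k := by
      intro n
      have hsub : lev Q n ⊆ ⋃ k ∈ Finset.range (n + 1),
          (fun p : List ℕ × List ℕ => p.1 ++ p.2) '' (lev P k ×ˢ DS (n - k) k) := by
        rintro l ⟨⟨A, hA, B, hB, rfl⟩, hl⟩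
        rw [List.length_append] at hl
        simp only [Set.mem_iUnion]
        exact ⟨A.length, Finset.mem_range.mpr (by omega), (A, B), ⟨⟨hA, rfl⟩, ⟨hB, by simp only; omega⟩⟩, rfl⟩
      have hfin : ∀ k, ((fun p : List ℕ × List ℕ => p.1 ++ p.2) '' (lev P k ×ˢ DS (n - k) k)).Finite :=
        fun k => ((lev_finite hv k).prod (DS_card _ _ _ rfl).1).image _
      calc d n ≤ _ := Set.ncard_le_ncard hsub (Set.Finite.biUnion (Finset.finite_toSet _) (fun k _ => hfin k))
        _ ≤ ∑ k ∈ Finset.range (n + 1), ((fun p : List ℕ × List ℕ => p.1 ++ p.2) ''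
              (lev P k ×ˢ DS (n - k) k)).ncard := Finset.set_ncard_biUnion_le _ _
        _ ≤ _ := by
          apply Finset.sum_le_sum
          intro k hk
          have hk' := Finset.mem_range.mp hk
          refine (Set.ncard_image_le ((lev_finite hv k).prod (DS_card _ _ _ rfl).1)).trans ?_
          rw [Set.ncard_prod, (DS_card _ (n - k) k rfl).2, show n - k + k = n by omega]
    intro ε hε hεγ
    set e := min (ε / 2) (γ / 2) with he
    have he0 : 0 < e := by positivity
    have he1 : e ≤ ε / 2 := min_le_left _ _
    have he2 : e ≤ γ / 2 := min_le_right _ _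
    obtain ⟨K, hK, hb⟩ := hg e he0 (by linarith)
    set s := (γ + 1 - e) / (γ + 1 - ε) - 1 with hs
    have hpe : 0 < γ + 1 - ε := by linarith
    have hs0 : 0 < s := by
      rw [hs, sub_pos, one_lt_div hpe]; linarith
    have hbern : ∀ n : ℕ, ((n : ℝ) + 1) * (γ + 1 - ε) ^ n ≤ (1 + 1 / s) * (γ + 1 - e) ^ n := by
      intro n
      have h1 : 1 + (n : ℝ) * s ≤ (1 + s) ^ n := one_add_mul_le_pow (by linarith) n
      have h2 : γ + 1 - e = (1 + s) * (γ + 1 - ε) := by rw [hs]; field_simp; ring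
      rw [h2, mul_pow, ← mul_assoc]
      gcongr
      calc (n : ℝ) + 1 ≤ (1 + 1 / s) * (1 + n * s) := by
            have : (1 + 1 / s) * (1 + n * s) = 1 + n * s + 1 / s + n := by field_simp; ring
            rw [this]
            have : 0 < 1 / s := by positivity
            have : 0 ≤ n * s := by positivity
            linarith
        _ ≤ _ := by gcongr
    refine ⟨K * (1 + 1 / s), by positivity, fun n => ⟨?_, ?_⟩⟩
    · have h1 : (d n : ℝ) ≤ K * (γ + e + 1) ^ n := by
        calc (d n : ℝ) ≤ ∑ k ∈ Finset.range (n + 1), (c k : ℝ) * n.choose k := by exact_mod_cast hupp n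
          _ ≤ ∑ k ∈ Finset.range (n + 1), (K * (γ + e) ^ k) * n.choose k := by
              gcongr with k hk
              exact (hb k).1
          _ = K * (γ + e + 1) ^ n := by
              rw [add_pow, Finset.mul_sum]
              simp [mul_assoc]
      calc (d n : ℝ) ≤ K * (γ + e + 1) ^ n := h1
        _ ≤ K * (1 + 1 / s) * (γ + 1 + ε) ^ n := by
            gcongr ?_ * ?_
            · apply le_mul_of_one_le_right hK.le
              have : 0 < 1 / s := by positivity
              linarith
            · apply pow_le_pow_left₀ (by positivity); linarith
    · have h1 : (γ - e + 1) ^ n ≤ K * ((n + 1) * d n) := by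
        calc (γ - e + 1) ^ n = ∑ k ∈ Finset.range (n + 1), (γ - e) ^ k * n.choose k := by
              rw [add_pow]; simp
          _ ≤ ∑ k ∈ Finset.range (n + 1), (K * c k) * n.choose k := by
              gcongr with k hk
              exact (hb k).2
          _ ≤ ∑ k ∈ Finset.range (n + 1), K * d n := by
              apply Finset.sum_le_sum
              intro k hk
              rw [mul_assoc]
              gcongr
              exact_mod_cast hlow n k (by have := Finset.mem_range.mp hk; omega)
          _ = K * ((n + 1) * d n) := by
              rw [Finset.sum_const, Finset.card_range]; simp; ring
      have h2 := hbern n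
      have h3 : ((n : ℝ) + 1) * (γ + 1 - ε) ^ n ≤ ((n : ℝ) + 1) * (K * (1 + 1 / s) * d n) := by
        calc _ ≤ (1 + 1 / s) * (γ + 1 - e) ^ n := h2
          _ = (1 + 1 / s) * (γ - e + 1) ^ n := by ring_nf
          _ ≤ (1 + 1 / s) * (K * ((n + 1) * d n)) := by gcongr
          _ = _ := by ring
      exact le_of_mul_le_mul_left h3 (by positivity)

/-! ### Words and their codes -/

/-- Concatenated blocks `0^b (b+1)`. -/
def bl : List ℕ → List ℕ
  | [] => []
  | b :: r => List.replicate b 0 ++ (b + 1) :: bl r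

/-- The code of a word. -/
def enc (w : List ℕ) : List ℕ := 0 :: bl w

/-- Weight of a word, the length of its code. -/
def wt : List ℕ → ℕ
  | [] => 1
  | b :: r => (b + 1) + wt r

lemma enc_length (w : List ℕ) : (enc w).length = wt w := by
  induction w with
  | nil => rfl
  | cons b r ih =>
    simp only [enc, bl, wt, List.length_cons, List.length_append, List.length_replicate] at ih ⊢
    omega

lemma rep_inj (b b' : ℕ) (r r' : List ℕ)
    (h : List.replicate b 0 ++ (b + 1) :: r = List.replicate b' 0 ++ (b' + 1) :: r') : b = b' ∧ r = r' := by
  have aux : ∀ (b b' c c' : ℕ) (r r' : List ℕ), List.replicate b 0 ++ (c + 1) :: r =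
      List.replicate b' 0 ++ (c' + 1) :: r' → b = b' ∧ r = r' := by
    intro b
    induction b with
    | zero =>
      intro b' c c' r r' h
      cases b' with
      | zero => simp at h; exact ⟨rfl, h.2⟩
      | succ b' => simp [List.replicate_succ] at h
    | succ b ih =>
      intro b' c c' r r' h
      cases b' with
      | zero => simp [List.replicate_succ] at h
      | succ b' =>
        simp only [List.replicate_succ, List.cons_append, List.cons.injEq, true_and] at h
        obtain ⟨h1, h2⟩ := ih b' c c' r r' h
        exact ⟨by omega, h2⟩
  exact aux _ _ _ _ _ _ h

lemma bl_injective : Function.Injective bl := by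
  intro w
  induction w with
  | nil =>
    intro w' h
    cases w' with
    | nil => rfl
    | cons b r => simp [bl] at h
  | cons b r ih =>
    intro w' h
    cases w' with
    | nil => simp [bl] at h
    | cons b' r' =>
      simp only [bl] at h
      obtain ⟨rfl, h2⟩ := rep_inj _ _ _ _ h
      rw [ih h2]

lemma enc_injective : Function.Injective enc := by
  intro w w' h
  simp only [enc, List.cons.injEq, true_and] at h
  exact bl_injective h

lemma VA_replicate (b : ℕ) (l : List ℕ) : ∀ k, VA k (List.replicate b 0 ++ l) ↔ VA (k + b) l := by
  induction b with
  | zero => intro k; simp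
  | succ b ih =>
    intro k
    simp only [List.replicate_succ, List.cons_append, VA, ih, Nat.zero_le, true_and]
    rw [show k + 1 + b = k + (b + 1) by omega]

lemma VA_bl (w : List ℕ) : ∀ {k : ℕ}, 1 ≤ k → VA k (bl w) := by
  induction w with
  | nil => intros; trivial
  | cons b r ih =>
    intro k hk
    rw [bl, VA_replicate]
    exact ⟨by omega, ih (by omega)⟩

lemma enc_valid (w : List ℕ) : Valid (enc w) := ⟨le_rfl, VA_bl w le_rfl⟩

lemma split_rep {b c : ℕ} {l a v : List ℕ} (h : List.replicate b 0 ++ c :: l = a ++ v) :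
    (∃ a', a = List.replicate b 0 ++ c :: a' ∧ l = a' ++ v) ∨
    (∃ i z, i + z = b ∧ a = List.replicate i 0 ∧ v = List.replicate z 0 ++ c :: l) := by
  induction b generalizing a with
  | zero =>
    rcases a with _ | ⟨x, a⟩
    · right; exact ⟨0, 0, rfl, rfl, by simpa using h.symm⟩
    · left
      simp only [List.replicate_zero, List.nil_append, List.cons_append, List.cons.injEq] at h
      exact ⟨a, by simp [h.1], h.2⟩
  | succ b ih =>
    rcases a with _ | ⟨x, a⟩
    · right; exact ⟨0, b + 1, by omega, rfl, by simpa using h.symm⟩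
    · simp only [List.replicate_succ, List.cons_append, List.cons.injEq] at h
      obtain ⟨rfl, h⟩ := h
      rcases ih h with ⟨a', h1, h2⟩ | ⟨i, z, h1, h2, h3⟩
      · left; exact ⟨a', by simp [List.replicate_succ, h1], h2⟩
      · right; exact ⟨i + 1, z, by omega, by simp [List.replicate_succ, h2], h3⟩

lemma bl_suffix (w : List ℕ) : ∀ a v, bl w = a ++ v → v ≠ [] → ¬ Valid v := by
  induction w with
  | nil => intro a v h hv; simp [bl] at h; exact absurd h.2 hv
  | cons b r ih =>
    intro a v h hv
    rw [bl] at h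
    rcases split_rep h with ⟨a', h1, h2⟩ | ⟨i, z, h1, h2, h3⟩
    · exact ih a' v h2 hv
    · rw [h3, Valid, VA_replicate]
      intro h
      have := h.1
      omega

lemma enc_Ind (w : List ℕ) : Ind (enc w) := by
  refine ⟨by simp [enc], enc_valid w, ?_⟩
  intro a b h ha hb
  rcases a with _ | ⟨x, a⟩
  · exact absurd rfl ha
  · simp only [enc, List.cons_append, List.cons.injEq] at h
    exact bl_suffix w a b h.2 hb

lemma dl_replicate (b : ℕ) (l : List ℕ) : ∀ t, dl t (List.replicate b 0 ++ l) = List.replicate b 0 ++ dl (t + b) l := by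
  induction b with
  | zero => intro t; simp
  | succ b ih =>
    intro t
    simp only [List.replicate_succ, List.cons_append, dl, ih, Nat.not_lt_zero, if_false]
    rw [show t + 1 + b = t + (b + 1) by omega]

lemma dl_bl (w : List ℕ) {t : ℕ} (ht : 1 ≤ t) : dl t (bl w) = bl w := dl_valid _ ht (VA_bl w le_rfl)

/-- All results of keep-type deletions satisfy `Q`. -/
def AK : (List ℕ → Prop) → List ℕ → Prop
  | _, [] => True
  | Q, x :: r => Q [] ∧ (x = 0 → Q r) ∧ (1 ≤ x → Q [x - 1]) ∧ (2 ≤ x → Q ((x - 1) :: r)) ∧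
      AK (fun r' => Q (x :: r')) r

/-- All results of drop-type deletions satisfy `Q`. -/
def AD : (List ℕ → Prop) → List ℕ → Prop
  | _, [] => True
  | Q, x :: r => Q r ∧ (1 ≤ x → Q ((x - 1) :: r)) ∧ AD Q r

lemma AK_mono (w : List ℕ) : ∀ {Q Q' : List ℕ → Prop}, (∀ k, Q k → Q' k) → AK Q w → AK Q' w := by
  induction w with
  | nil => intros; trivial
  | cons x r ih =>
    rintro Q Q' h ⟨h1, h2, h3, h4, h5⟩
    exact ⟨h _ h1, fun a => h _ (h2 a), fun a => h _ (h3 a), fun a => h _ (h4 a), ih (fun k => h _) h5⟩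

lemma AD_mono (w : List ℕ) {Q Q' : List ℕ → Prop} (h : ∀ k, Q k → Q' k) : AD Q w → AD Q' w := by
  induction w with
  | nil => intros; trivial
  | cons x r ih =>
    rintro ⟨h1, h2, h3⟩
    exact ⟨h _ h1, fun a => h _ (h2 a), ih h3⟩

lemma dl_bl_mem (w : List ℕ) {Q : List ℕ → Prop} (h0 : Q []) (h : AD Q w) :
    dl 0 (bl w) ∈ PS (enc '' {w | Q w}) := by
  induction w with
  | nil => exact PS_nil _
  | cons b r ih =>
    obtain ⟨h1, h2, h3⟩ := h
    rw [bl, dl_replicate, dl, if_pos (by omega)]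
    rcases b with _ | b
    · have : [0] ∈ PS (enc '' {w | Q w}) := PS_of_mem ⟨[], h0, rfl⟩
      simpa using PS_append this (ih h3)
    · rw [dl_bl _ (by omega)]
      refine PS_of_mem ⟨b :: r, h2 (by omega), ?_⟩
      simp [enc, bl, List.replicate_succ]

lemma bl_del (w : List ℕ) : ∀ {K Q : List ℕ → Prop}, AK K w → AD Q w → Q [] → ∀ A x R, bl w = A ++ x :: R →
    ∃ k s, K k ∧ s ∈ PS (enc '' {w | Q w}) ∧ A ++ dl x R = bl k ++ s := by
  induction w with
  | nil => intro K Q _ _ _ A x R h; simp [bl] at h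
  | cons b r ih =>
    rintro K Q ⟨k1, k2, k3, k4, k5⟩ ⟨d1, d2, d3⟩ h0 A x R h
    have hz : [0] ∈ PS (enc '' {w | Q w}) := PS_of_mem ⟨[], h0, rfl⟩
    rw [bl] at h
    rcases split_rep h with ⟨A', h1, h2⟩ | ⟨i, z, h1, h2, h3⟩
    · obtain ⟨k, s, hk, hs, e⟩ := ih k5 d3 h0 A' x R h2
      refine ⟨b :: k, s, hk, hs, ?_⟩
      rw [h1, bl]
      simp [e]
    · rcases z with _ | z
      · simp only [List.replicate_zero, List.nil_append, List.cons.injEq] at h3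
        obtain ⟨rfl, rfl⟩ := h3
        have hi : i = b := by omega
        subst hi
        rw [h2, dl_bl _ (by omega)]
        rcases i with _ | i
        · exact ⟨r, [], k2 rfl, PS_nil _, by simp⟩
        · refine ⟨[], List.replicate i 0 ++ enc r, k1, ?_, ?_⟩
          · have hr : enc r ∈ PS (enc '' {w | Q w}) := PS_of_mem ⟨r, d1, rfl⟩
            refine PS_append ?_ hr
            clear * - hz
            induction i with
            | zero => exact PS_nil _
            | succ i ih => simpa [List.replicate_succ] using PS_append hz ih
          · simp only [bl, enc, List.nil_append, List.replicate_succ']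
            simp
      · simp only [List.replicate_succ, List.cons_append, List.cons.injEq] at h3
        obtain ⟨rfl, rfl⟩ := h3
        rw [h2, dl_replicate, dl, if_pos (by omega)]
        rcases z with _ | z
        · refine ⟨[b - 1], dl 0 (bl r), k3 (by omega), dl_bl_mem r h0 d3, ?_⟩
          have hi : i = b - 1 := by omega
          subst hi
          simp [bl]
          omega
        · refine ⟨(b - 1) :: r, [], k4 (by omega), PS_nil _, ?_⟩
          rw [dl_bl _ (by omega), List.append_nil, bl, ← List.append_assoc, ← List.replicate_add]
          rw [show b + 1 - 1 = b - 1 + 1 by omega, show i + (z + 1) = b - 1 by omega]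

lemma enc_del {w : List ℕ} {D : Set (List ℕ)} {Q : List ℕ → Prop} (hQ : ∀ k, Q k → enc k ∈ D)
    (h0 : Q []) (hk : AK Q w) (hd : AD Q w) (v : List ℕ) (hv : Del1 (enc w) v) : v ∈ PS D := by
  have hsub : PS (enc '' {w | Q w}) ⊆ PS D := by
    apply PS_mono
    rintro _ ⟨k, hk, rfl⟩
    exact hQ k hk
  obtain ⟨A, x, R, h, rfl⟩ := hv
  apply hsub
  rcases A with _ | ⟨a, A⟩
  · simp only [enc, List.nil_append, List.cons.injEq] at h
    obtain ⟨rfl, rfl⟩ := h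
    exact dl_bl_mem w h0 hd
  · simp only [enc, List.cons_append, List.cons.injEq] at h
    obtain ⟨rfl, h⟩ := h
    obtain ⟨k, s, hk, hs, e⟩ := bl_del w hk hd h0 A x R h
    rw [List.cons_append, e]
    have hk' : enc k ∈ PS (enc '' {w | Q w}) := PS_of_mem ⟨k, hk, rfl⟩
    exact PS_append hk' hs

/-- `1^e ++ s`. -/
def on : ℕ → List ℕ → List ℕ
  | 0, s => s
  | e + 1, s => 1 :: on e s

lemma wt_on (e : ℕ) (s : List ℕ) : wt (on e s) = 2 * e + wt s := by
  induction e with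
  | zero => simp [on]
  | succ e ih => simp only [on, wt, ih]; omega

lemma AK_on (e : ℕ) (s : List ℕ) : ∀ (Q : List ℕ → Prop), (∀ i < e, Q (on i [])) → (∀ i < e, Q (on i [0])) →
    AK (fun r => Q (on e r)) s → AK Q (on e s) := by
  induction e with
  | zero => intro Q _ _ h; exact h
  | succ e ih =>
    intro Q h1 h2 h3
    simp only [on, AK]
    refine ⟨h1 0 (by omega), by simp, fun _ => h2 0 (by omega), by omega, ih _ ?_ ?_ h3⟩
    · intro i hi; exact h1 (i + 1) (by omega)
    · intro i hi; exact h2 (i + 1) (by omega)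

lemma AD_on (e : ℕ) (s : List ℕ) (Q : List ℕ → Prop) (h1 : ∀ i < e, Q (on i s)) (h2 : ∀ i < e, Q (0 :: on i s))
    (h3 : AD Q s) : AD Q (on e s) := by
  induction e with
  | zero => exact h3
  | succ e ih =>
    exact ⟨h1 e (by omega), fun _ => h2 e (by omega),
      ih (fun i hi => h1 i (by omega)) (fun i hi => h2 i (by omega))⟩

lemma on_inj {e e' : ℕ} {s s' : List ℕ} (hs : ∀ r, s ≠ 1 :: r) (hs' : ∀ r, s' ≠ 1 :: r)
    (h : on e s = on e' s') : e = e' ∧ s = s' := by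
  induction e generalizing e' with
  | zero =>
    cases e' with
    | zero => exact ⟨rfl, h⟩
    | succ e' => exact absurd h (hs _)
  | succ e ih =>
    cases e' with
    | zero => exact absurd h.symm (hs' _)
    | succ e' =>
      simp only [on, List.cons.injEq, true_and] at h
      obtain ⟨h1, h2⟩ := ih h
      exact ⟨by omega, h2⟩

/-! ### Greedy filling -/

lemma fill_step (l : List ℝ) : ∀ (t r : ℝ), (∀ x ∈ l, 0 ≤ x ∧ x ≤ t) → 0 ≤ r → r ≤ l.sum + t →
    ∃ j : ℕ, (l.take j).sum ≤ r ∧ r - (l.take j).sum ≤ t := by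
  induction l with
  | nil => intro t r _ h0 h; exact ⟨0, by simpa using h0, by simpa using h⟩
  | cons x xs ih =>
    intro t r hx h0 h
    rcases lt_or_ge r x with hlt | hge
    · exact ⟨0, by simpa using h0, by simpa using hlt.le.trans (hx x (by simp)).2⟩
    · obtain ⟨j, h1, h2⟩ := ih t (r - x) (fun z hz => hx z (by simp [hz])) (by linarith) (by
        rw [List.sum_cons] at h; linarith)
      refine ⟨j + 1, ?_, ?_⟩ <;> rw [List.take_succ_cons, List.sum_cons] <;> linarith

theorem fill (b : ℕ → List ℝ) (ρ : ℕ → ℝ) (hb : ∀ k, ∀ x ∈ b k, 0 ≤ x ∧ x ≤ ρ (k + 1))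
    (hρ : ∀ k, ρ k ≤ (b k).sum + ρ (k + 1)) (hlim : Tendsto ρ atTop (nhds 0)) (r : ℝ) (h0 : 0 ≤ r)
    (h1 : r ≤ ρ 0) : ∃ j : ℕ → ℕ, HasSum (fun k => ((b k).take (j k)).sum) r := by
  have hst : ∀ k (r : ℝ), ∃ j : ℕ, 0 ≤ r → r ≤ ρ k → ((b k).take j).sum ≤ r ∧ r - ((b k).take j).sum ≤ ρ (k + 1) := by
    intro k r
    by_cases h : 0 ≤ r ∧ r ≤ ρ k
    · obtain ⟨j, hj⟩ := fill_step (b k) (ρ (k + 1)) r (hb k) h.1 (h.2.trans (hρ k))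
      exact ⟨j, fun _ _ => hj⟩
    · exact ⟨0, fun a b => absurd ⟨a, b⟩ h⟩
  choose st hst using hst
  let rs : ℕ → ℝ := fun n => Nat.rec r (fun k s => s - ((b k).take (st k s)).sum) n
  have rs0 : rs 0 = r := rfl
  have rsS : ∀ k, rs (k + 1) = rs k - ((b k).take (st k (rs k))).sum := fun k => rfl
  have hrs : ∀ k, 0 ≤ rs k ∧ rs k ≤ ρ k := by
    intro k
    induction k with
    | zero => exact ⟨h0, h1⟩
    | succ k ih =>
      have := hst k (rs k) ih.1 ih.2
      rw [rsS]
      exact ⟨by linarith [this.1], this.2⟩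
  refine ⟨fun k => st k (rs k), ?_⟩
  rw [hasSum_iff_tendsto_nat_of_nonneg]
  · have hpart : ∀ n, ∑ k ∈ Finset.range n, ((b k).take (st k (rs k))).sum = r - rs n := by
      intro n
      induction n with
      | zero => simp [rs0]
      | succ n ih => rw [Finset.sum_range_succ, ih, rsS]; ring
    simp_rw [hpart]
    have : Tendsto rs atTop (nhds 0) :=
      tendsto_of_tendsto_of_tendsto_of_le_of_le tendsto_const_nhds hlim (fun k => (hrs k).1) (fun k => (hrs k).2)
    simpa using (tendsto_const_nhds (x := r)).sub this
  · intro k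
    apply List.sum_nonneg
    intro x hx
    exact (hb k x (List.mem_of_mem_take hx)).1

lemma W_union (y : ℝ) {X Y : Set (List ℕ)} (h : Disjoint X Y) : W y (X ∪ Y) = W y X + W y Y := by
  unfold W
  exact Summable.tsum_union_disjoint (f := fun u : List ℕ => ENNReal.ofReal y ^ u.length) h
    ENNReal.summable ENNReal.summable

lemma W_iUnion (y : ℝ) (X : ℕ → Set (List ℕ)) (h : ∀ i j, i ≠ j → Disjoint (X i) (X j)) :
    W y (⋃ i, X i) = ∑' i, W y (X i) := by
  unfold W
  let e := Set.unionEqSigmaOfDisjoint (t := X) (fun i j hij => h i j hij)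
  rw [← e.symm.tsum_eq (fun u : (⋃ i, X i : Set (List ℕ)) => ENNReal.ofReal y ^ u.1.length), ENNReal.tsum_sigma']
  rfl

lemma W_list (y : ℝ) (hy : 0 ≤ y) (l : List (List ℕ)) (hl : l.Nodup) :
    W y {u | u ∈ l} = ENNReal.ofReal (l.map (fun u => y ^ u.length)).sum := by
  induction l with
  | nil =>
    have : {u : List ℕ | u ∈ ([] : List (List ℕ))} = ∅ := by ext u; simp
    rw [this]
    simp [W]
  | cons a l ih =>
    have hn := List.nodup_cons.mp hl
    have : {u : List ℕ | u ∈ a :: l} = {a} ∪ {u | u ∈ l} := by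
      ext u; simp
    rw [this, W_union, ih hn.2, List.map_cons, List.sum_cons, ENNReal.ofReal_add (by positivity)]
    · congr 1
      unfold W
      rw [tsum_singleton a (fun u : List ℕ => ENNReal.ofReal y ^ u.length), ENNReal.ofReal_pow hy]
    · apply List.sum_nonneg
      intro x hx
      obtain ⟨u, _, rfl⟩ := List.mem_map.mp hx
      positivity
    · rw [Set.disjoint_singleton_left]
      exact hn.1

lemma W_mono (y : ℝ) {X Y : Set (List ℕ)} (h : X ⊆ Y) : W y X ≤ W y Y :=
  ENNReal.tsum_mono_subtype (fun u : List ℕ => ENNReal.ofReal y ^ u.length) h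

theorem block_GR (y : ℝ) (hy : 0 < y) (base : Set (List ℕ)) (B : ℕ → List (List ℕ))
    (hI : ∀ u ∈ base, Ind u) (hIB : ∀ k, ∀ u ∈ B k, Ind u) (h0 : [0] ∈ base)
    (hc : ∀ u ∈ base, ∀ v, Del1 u v → v ∈ PS base)
    (hcB : ∀ k p u s, B k = p ++ u :: s → ∀ v, Del1 u v → v ∈ PS (base ∪ {x | x ∈ p}))
    (hnd : ∀ k, (B k).Nodup) (hdis : ∀ k k', ∀ u ∈ B k, u ∈ B k' → k = k')
    (hdb : ∀ k, ∀ u ∈ B k, u ∉ base)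
    (ρ : ℕ → ℝ) (hb : ∀ k, ∀ u ∈ B k, y ^ u.length ≤ ρ (k + 1))
    (hρ : ∀ k, ρ k ≤ ((B k).map (fun u => y ^ u.length)).sum + ρ (k + 1))
    (hlim : Tendsto ρ atTop (nhds 0)) (hW : W y base ≤ 1) (hW2 : 1 ≤ W y base + ENNReal.ofReal (ρ 0)) :
    GR (1 / y) := by
  have hne : W y base ≠ ⊤ := ne_top_of_le_ne_top ENNReal.one_ne_top hW
  set r := (1 - W y base).toReal with hr
  have hne2 : 1 - W y base ≠ ⊤ := ne_top_of_le_ne_top ENNReal.one_ne_top tsub_le_self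
  have hofr : ENNReal.ofReal r = 1 - W y base := ENNReal.ofReal_toReal hne2
  have hle : 1 - W y base ≤ ENNReal.ofReal (ρ 0) := by
    rw [tsub_le_iff_left]; exact hW2
  by_cases hρ0 : ρ 0 ≤ 0
  · -- degenerate: base already has weight one
    have h1 : W y base = 1 := by
      rw [ENNReal.ofReal_of_nonpos hρ0, add_zero] at hW2
      exact le_antisymm hW hW2
    exact sum_closure_GR base hI h0 hc y hy h1
  have hr1 : r ≤ ρ 0 := by
    rw [← hofr] at hle
    exact (ENNReal.ofReal_le_ofReal_iff (by linarith)).mp hle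
  obtain ⟨j, hj⟩ := fill (fun k => (B k).map (fun u => y ^ u.length)) ρ (by
    intro k x hx
    obtain ⟨u, hu, rfl⟩ := List.mem_map.mp hx
    exact ⟨by positivity, hb k u hu⟩) hρ hlim r ENNReal.toReal_nonneg hr1
  set X : ℕ → Set (List ℕ) := fun k => {u | u ∈ (B k).take (j k)} with hX
  have hXB : ∀ k, ∀ u ∈ X k, u ∈ B k := fun k u hu => List.mem_of_mem_take hu
  refine sum_closure_GR (base ∪ ⋃ k, X k) ?_ (Or.inl h0) ?_ y hy ?_
  · rintro u (hu | hu)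
    · exact hI u hu
    · obtain ⟨k, hk⟩ := Set.mem_iUnion.mp hu
      exact hIB k u (hXB k u hk)
  · rintro u (hu | hu) v hv
    · exact PS_mono Set.subset_union_left (hc u hu v hv)
    · obtain ⟨k, hk⟩ := Set.mem_iUnion.mp hu
      have hk' : u ∈ (B k).take (j k) := hk
      obtain ⟨p, s, hps⟩ := List.append_of_mem hk'
      have hB : B k = p ++ u :: (s ++ (B k).drop (j k)) := by
        conv_lhs => rw [← List.take_append_drop (j k) (B k), hps]
        simp
      refine PS_mono ?_ (hcB k p u _ hB v hv)
      rintro x (hx | hx)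
      · exact Or.inl hx
      · right
        refine Set.mem_iUnion.mpr ⟨k, ?_⟩
        change x ∈ (B k).take (j k)
        rw [hps]
        exact List.mem_append_left _ hx
  · rw [W_union, W_iUnion]
    · have : ∀ k, W y (X k) = ENNReal.ofReal (((B k).map (fun u => y ^ u.length)).take (j k)).sum := by
        intro k
        rw [hX, W_list y hy.le _ ((hnd k).sublist (List.take_sublist _ _)), List.map_take]
      simp_rw [this]
      rw [← ENNReal.ofReal_tsum_of_nonneg _ hj.summable, hj.tsum_eq, hofr, add_tsub_cancel_of_le hW]
      intro k
      apply List.sum_nonneg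
      intro x hx
      obtain ⟨u, hu, rfl⟩ := List.mem_map.mp (List.mem_of_mem_take hx)
      positivity
    · intro k k' hkk
      rw [Set.disjoint_left]
      intro u hu hu'
      exact hkk (hdis k k' u (hXB k u hu) (hXB k' u hu'))
    · rw [Set.disjoint_left]
      intro u hu hu'
      obtain ⟨k, hk⟩ := Set.mem_iUnion.mp hu'
      exact hdb k u (hXB k u hk) hu

lemma W_union_le (y : ℝ) (X Y : Set (List ℕ)) : W y (X ∪ Y) ≤ W y X + W y Y :=
  ENNReal.tsum_union_le (fun u : List ℕ => ENNReal.ofReal y ^ u.length) X Y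

lemma W_le_of_union {y : ℝ} {Z X Y : Set (List ℕ)} {a b : ℝ} (h : Z ⊆ X ∪ Y) (ha : 0 ≤ a) (hb : 0 ≤ b)
    (hX : W y X ≤ ENNReal.ofReal a) (hY : W y Y ≤ ENNReal.ofReal b) : W y Z ≤ ENNReal.ofReal (a + b) := by
  rw [ENNReal.ofReal_add ha hb]
  exact (W_mono y h).trans ((W_union_le y X Y).trans (add_le_add hX hY))

lemma geo_ofReal {y : ℝ} (hy : 0 < y) (hy1 : y < 1) (c : ℕ) :
    ∑' a : ℕ, ENNReal.ofReal y ^ (c + 2 * a) = ENNReal.ofReal (y ^ c / (1 - y ^ 2)) := by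
  have hy2 : y ^ 2 < 1 := by nlinarith
  have h1 : HasSum (fun a : ℕ => y ^ (c + 2 * a)) (y ^ c / (1 - y ^ 2)) := by
    have := (hasSum_geometric_of_lt_one (by positivity) hy2).mul_left (y ^ c)
    simpa [pow_add, pow_mul, div_eq_mul_inv] using this
  rw [← h1.tsum_eq, ENNReal.ofReal_tsum_of_nonneg (fun a => by positivity) h1.summable]
  congr 1
  funext a
  rw [ENNReal.ofReal_pow hy.le]

lemma W_fam {y : ℝ} (hy : 0 < y) (hy1 : y < 1) {X : Set (List ℕ)} (f : ℕ → List ℕ) (c : ℕ)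
    (hX : ∀ u ∈ X, ∃ a, u = f a) (hf : ∀ a, (f a).length = c + 2 * a) :
    W y X ≤ ENNReal.ofReal (y ^ c / (1 - y ^ 2)) := by
  have h1 : X ⊆ Set.range f := by
    intro u hu
    obtain ⟨a, rfl⟩ := hX u hu
    exact ⟨a, rfl⟩
  refine (W_mono y h1).trans ?_
  rw [← geo_ofReal hy hy1]
  let g : ℕ → Set.range f := fun a => ⟨f a, a, rfl⟩
  have hg : Function.Surjective g := by
    rintro ⟨_, a, rfl⟩
    exact ⟨a, rfl⟩
  refine (ENNReal.tsum_le_tsum_comp_of_surjective hg _).trans (le_of_eq ?_)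
  congr 1
  funext a
  simp only [g, hf]

lemma W_fam2 {y : ℝ} (hy : 0 < y) (hy1 : y < 1) {X : Set (List ℕ)} (f : ℕ → ℕ → List ℕ) (c : ℕ)
    (hX : ∀ u ∈ X, ∃ a b, u = f a b) (hf : ∀ a b, (f a b).length = c + 2 * a + 2 * b) :
    W y X ≤ ENNReal.ofReal (y ^ c / (1 - y ^ 2) ^ 2) := by
  have hy2 : y ^ 2 < 1 := by nlinarith
  let F : ℕ × ℕ → List ℕ := fun p => f p.1 p.2
  have h1 : X ⊆ Set.range F := by
    intro u hu
    obtain ⟨a, b, rfl⟩ := hX u hu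
    exact ⟨(a, b), rfl⟩
  refine (W_mono y h1).trans ?_
  let g : ℕ × ℕ → Set.range F := fun a => ⟨F a, a, rfl⟩
  have hg : Function.Surjective g := by
    rintro ⟨_, a, rfl⟩
    exact ⟨a, rfl⟩
  refine (ENNReal.tsum_le_tsum_comp_of_surjective hg _).trans (le_of_eq ?_)
  rw [ENNReal.tsum_prod']
  simp only [g, F, hf, geo_ofReal hy hy1]
  have : ∀ a : ℕ, ENNReal.ofReal (y ^ (c + 2 * a) / (1 - y ^ 2)) =
      ENNReal.ofReal y ^ (c + 2 * a) * ENNReal.ofReal (1 / (1 - y ^ 2)) := by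
    intro a
    rw [← ENNReal.ofReal_pow hy.le, ← ENNReal.ofReal_mul (by positivity)]
    congr 1; ring
  simp_rw [this]
  rw [ENNReal.tsum_mul_right, geo_ofReal hy hy1, ← ENNReal.ofReal_mul (by
    apply div_nonneg (by positivity); linarith)]
  congr 1
  field_simp

lemma W_ge_list {y : ℝ} (hy : 0 ≤ y) {X : Set (List ℕ)} (l : List (List ℕ)) (hl : l.Nodup) (h : ∀ u ∈ l, u ∈ X) :
    ENNReal.ofReal (l.map (fun u => y ^ u.length)).sum ≤ W y X := by
  rw [← W_list y hy l hl]
  exact W_mono y h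

/-! ### Regular families of words -/

lemma AK_on_iff (e : ℕ) (s : List ℕ) (Q : List ℕ → Prop) : AK Q (on e s) ↔
    (∀ i < e, Q (on i [])) ∧ (∀ i < e, Q (on i [0])) ∧ AK (fun r => Q (on e r)) s := by
  constructor
  · induction e generalizing Q with
    | zero => intro h; exact ⟨by simp, by simp, h⟩
    | succ e ih =>
      rintro ⟨h1, _, h3, _, h5⟩
      obtain ⟨a, b, c⟩ := ih _ h5
      refine ⟨?_, ?_, c⟩
      · intro i hi
        cases i with
        | zero => exact h1
        | succ i => exact a i (by omega)
      · intro i hi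
        cases i with
        | zero => exact h3 le_rfl
        | succ i => exact b i (by omega)
  · rintro ⟨a, b, c⟩
    exact AK_on e s Q a b c

lemma AD_on_iff (e : ℕ) (s : List ℕ) (Q : List ℕ → Prop) : AD Q (on e s) ↔
    (∀ i < e, Q (on i s)) ∧ (∀ i < e, Q (0 :: on i s)) ∧ AD Q s := by
  constructor
  · induction e with
    | zero => intro h; exact ⟨by simp, by simp, h⟩
    | succ e ih =>
      rintro ⟨h1, h2, h3⟩
      obtain ⟨a, b, c⟩ := ih h3
      refine ⟨?_, ?_, c⟩
      · intro i hi
        rcases Nat.lt_succ_iff_lt_or_eq.mp hi with h | rfl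
        · exact a i h
        · exact h1
      · intro i hi
        rcases Nat.lt_succ_iff_lt_or_eq.mp hi with h | rfl
        · exact b i h
        · exact h2 le_rfl
  · rintro ⟨a, b, c⟩
    exact AD_on e s Q a b c

/-- Every word of the list has its deletions in `Q` or earlier. -/
def Gd : (List ℕ → Prop) → List (List ℕ) → Prop
  | _, [] => True
  | Q, u :: s => (AK Q u ∧ AD Q u) ∧ Gd (fun w => Q w ∨ w = u) s

lemma Gd_spec (l : List (List ℕ)) : ∀ (Q : List ℕ → Prop), Q [] → Gd Q l → ∀ p u s, l.map enc = p ++ u :: s →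
    ∀ v, Del1 u v → v ∈ PS (enc '' {w | Q w} ∪ {x | x ∈ p}) := by
  induction l with
  | nil => intro Q _ _ p u s h; simp at h
  | cons a l ih =>
    intro Q h0 hG p u s h v hv
    rcases p with _ | ⟨b, p⟩
    · simp only [List.map_cons, List.nil_append, List.cons.injEq] at h
      obtain ⟨rfl, _⟩ := h
      exact enc_del (Q := Q) (fun k hk => Or.inl ⟨k, hk, rfl⟩) h0 hG.1.1 hG.1.2 v hv
    · simp only [List.map_cons, List.cons_append, List.cons.injEq] at h
      obtain ⟨rfl, h⟩ := h
      refine PS_mono ?_ (ih _ (Or.inl h0) hG.2 p u s h v hv)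
      rintro x (⟨w, hw | hw, rfl⟩ | hx)
      · exact Or.inl ⟨w, hw, rfl⟩
      · right; subst hw; simp
      · right
        exact List.mem_cons_of_mem _ hx

/-- `1^a` or `1^a 0`. -/
def Rt : List ℕ → Bool
  | [] => true
  | [0] => true
  | 1 :: r => Rt r
  | _ => false

/-- `1^j 2 r` with `r` in `Rt`. -/
def S1 : List ℕ → Bool
  | 1 :: r => S1 r
  | 2 :: r => Rt r
  | _ => false

/-- `1^e 2`. -/
def T1 : List ℕ → Bool
  | 1 :: r => T1 r
  | [2] => true
  | _ => false

@[simp] lemma Rt_on (e : ℕ) (s : List ℕ) : Rt (on e s) = Rt s := by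
  induction e with
  | zero => rfl
  | succ e ih => simpa [on, Rt] using ih

@[simp] lemma S1_on (e : ℕ) (s : List ℕ) : S1 (on e s) = S1 s := by
  induction e with
  | zero => rfl
  | succ e ih => simpa [on, S1] using ih

@[simp] lemma T1_on (e : ℕ) (s : List ℕ) : T1 (on e s) = T1 s := by
  induction e with
  | zero => rfl
  | succ e ih => simpa [on, T1] using ih

lemma Rt_shape (w : List ℕ) (h : Rt w = true) : ∃ a, w = on a [] ∨ w = on a [0] := by
  induction w with
  | nil => exact ⟨0, Or.inl rfl⟩
  | cons x r ih =>
    rcases x with _ | _ | x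
    · cases r with
      | nil => exact ⟨0, Or.inr rfl⟩
      | cons z r => simp [Rt] at h
    · obtain ⟨a, h | h⟩ := ih (by simpa [Rt] using h)
      · exact ⟨a + 1, Or.inl (by simp [on, h])⟩
      · exact ⟨a + 1, Or.inr (by simp [on, h])⟩
    · simp [Rt] at h

lemma S1_shape (w : List ℕ) (h : S1 w = true) : ∃ a r, w = on a (2 :: r) ∧ Rt r = true := by
  induction w with
  | nil => simp [S1] at h
  | cons x r ih =>
    rcases x with _ | _ | _ | x
    · simp [S1] at h
    · obtain ⟨a, s, h, hs⟩ := ih (by simpa [S1] using h)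
      exact ⟨a + 1, s, by simp [on, h], hs⟩
    · exact ⟨0, r, rfl, by simpa [S1] using h⟩
    · simp [S1] at h

lemma T1_shape (w : List ℕ) (h : T1 w = true) : ∃ a, w = on a [2] := by
  induction w with
  | nil => simp [T1] at h
  | cons x r ih =>
    rcases x with _ | _ | _ | x
    · simp [T1] at h
    · obtain ⟨a, h⟩ := ih (by simpa [T1] using h)
      exact ⟨a + 1, by simp [on, h]⟩
    · cases r with
      | nil => exact ⟨0, rfl⟩
      | cons z r => simp [T1] at h
    · simp [T1] at h

/-- Base words for the first interval. -/
def base1 : List ℕ → Bool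
  | [] => true
  | 0 :: r => Rt r || S1 r
  | 1 :: r => Rt r || S1 r
  | 2 :: r => Rt r || T1 r
  | 3 :: r => Rt r
  | _ => false

@[simp] lemma base1_on0 (e : ℕ) : base1 (on e []) = true := by
  cases e <;> simp [on, base1, Rt]
@[simp] lemma base1_on1 (e : ℕ) : base1 (on e [0]) = true := by
  cases e <;> simp [on, base1, Rt]
@[simp] lemma base1_on2 (e : ℕ) (s : List ℕ) (h : Rt s = true) : base1 (on e (2 :: s)) = true := by
  cases e <;> simp [on, base1, S1, h]

lemma base1_shape (w : List ℕ) (h : base1 w = true) :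
    (∃ a, w = on a [] ∨ w = on a [0] ∨ w = 0 :: 1 :: on a [] ∨ w = 0 :: on a [0] ∨ w = 3 :: on a [] ∨
      w = 3 :: on a [0] ∨ w = 2 :: on a [2]) ∨
    (∃ a b, w = on a (2 :: on b []) ∨ w = on a (2 :: on b [0]) ∨ w = 0 :: on a (2 :: on b []) ∨
      w = 0 :: on a (2 :: on b [0])) := by
  rcases w with _ | ⟨x, r⟩
  · left; exact ⟨0, Or.inl rfl⟩
  rcases x with _ | _ | _ | _ | x
  · simp only [base1, Bool.or_eq_true] at h
    rcases h with h | h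
    · obtain ⟨a, rfl | rfl⟩ := Rt_shape r h
      · rcases a with _ | a
        · left; exact ⟨0, by simp [on]⟩
        · left; exact ⟨a, by simp [on]⟩
      · left; exact ⟨a, by simp⟩
    · obtain ⟨a, s, rfl, hs⟩ := S1_shape r h
      obtain ⟨b, rfl | rfl⟩ := Rt_shape s hs
      · right; exact ⟨a, b, by simp⟩
      · right; exact ⟨a, b, by simp⟩
  · simp only [zero_add, base1, Bool.or_eq_true] at h
    rcases h with h | h
    · obtain ⟨a, rfl | rfl⟩ := Rt_shape r h
      · left; exact ⟨a + 1, by simp [on]⟩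
      · left; exact ⟨a + 1, by simp [on]⟩
    · obtain ⟨a, s, rfl, hs⟩ := S1_shape r h
      obtain ⟨b, rfl | rfl⟩ := Rt_shape s hs
      · right; exact ⟨a + 1, b, by simp [on]⟩
      · right; exact ⟨a + 1, b, by simp [on]⟩
  · simp only [zero_add, Nat.reduceAdd, base1, Bool.or_eq_true] at h
    rcases h with h | h
    · obtain ⟨a, rfl | rfl⟩ := Rt_shape r h
      · right; exact ⟨0, a, by simp [on]⟩
      · right; exact ⟨0, a, by simp [on]⟩
    · obtain ⟨a, rfl⟩ := T1_shape r h
      left; exact ⟨a, by simp⟩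
  · simp only [zero_add, Nat.reduceAdd, base1] at h
    obtain ⟨a, rfl | rfl⟩ := Rt_shape r h
    · left; exact ⟨a, by simp⟩
    · left; exact ⟨a, by simp⟩
  · simp [base1] at h

lemma b1nil : base1 [] = true := rfl
lemma b1c0 (r : List ℕ) : base1 (0 :: r) = (Rt r || S1 r) := rfl
lemma b1c1 (r : List ℕ) : base1 (1 :: r) = (Rt r || S1 r) := rfl
lemma b1c2 (r : List ℕ) : base1 (2 :: r) = (Rt r || T1 r) := rfl
lemma b1c3 (r : List ℕ) : base1 (3 :: r) = Rt r := rfl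
lemma b1c4 (n : ℕ) (r : List ℕ) : base1 ((n + 4) :: r) = false := rfl
lemma base1_on1s (e : ℕ) (s : List ℕ) (h : Rt s = true) : base1 (on e (1 :: s)) = true := by
  cases e <;> simp [on, base1, Rt, h]

lemma base1_on1n (e : ℕ) : base1 (on e [1]) = true := base1_on1s e [] rfl
lemma base1_on2n (e : ℕ) : base1 (on e [2]) = true := base1_on2 e [] rfl

lemma base1_closed (w : List ℕ) (h : base1 w = true) :
    AK (fun w => base1 w = true) w ∧ AD (fun w => base1 w = true) w := by
  rcases base1_shape w h with ⟨a, rfl | rfl | rfl | rfl | rfl | rfl | rfl⟩ | ⟨a, b, rfl | rfl | rfl | rfl⟩ <;>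
  simp [AK, AD, AK_on_iff, AD_on_iff, b1nil, b1c0, b1c1, b1c2, b1c3, base1_on1s, base1_on1n, base1_on2n, Rt, S1, T1]

/-- Blocks of words for the first interval. -/
def bw1 : ℕ → List (List ℕ)
  | 0 => [[0, 3], [4], [1, 3], [0, 3, 0], [0, 4], [4, 0], [5]]
  | e + 1 => [0 :: 2 :: on e [2], 2 :: on e [2, 0], 3 :: on e [2], 1 :: 2 :: on e [2], 0 :: 2 :: on e [2, 0],
      2 :: on e [2, 1], 3 :: on e [2, 0]]

lemma bw1_closed (k : ℕ) : Gd (fun w => base1 w = true) (bw1 k) := by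
  cases k with
  | zero => simp [bw1, Gd, AK, AD, base1, Rt, S1, T1]
  | succ e => simp [bw1, Gd, AK, AD, AK_on_iff, AD_on_iff, b1nil, b1c0, b1c1, b1c2, b1c3, base1_on2n, Rt, S1, T1]

lemma bw1_wt (k : ℕ) : ∀ w ∈ bw1 k, (enc w).length / 2 = k + 3 := by
  cases k with
  | zero => simp [bw1, enc_length, wt]
  | succ e =>
    simp only [bw1, List.mem_cons, List.not_mem_nil, or_false, enc_length]
    rintro w (rfl | rfl | rfl | rfl | rfl | rfl | rfl) <;> simp [wt, wt_on] <;> omega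

lemma bw1_nodup (k : ℕ) : (bw1 k).Nodup := by
  cases k with
  | zero => simp [bw1]
  | succ e =>
    have h1 : ∀ s s', on e s = on e s' → s = s' := by
      intro s s' h
      induction e with
      | zero => exact h
      | succ e ih => simp only [on, List.cons.injEq, true_and] at h; exact ih h
    have h2 : on e [2] ≠ on e [2, 0] := fun h => by simpa using h1 _ _ h
    have h3 : on e [2, 0] ≠ on e [2, 1] := fun h => by simpa using h1 _ _ h
    simp [bw1, h2, h3]

lemma bw1_base (k : ℕ) : ∀ w ∈ bw1 k, base1 w = false := by
  cases k with
  | zero => simp [bw1, base1, Rt, S1]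
  | succ e => simp [bw1, b1c0, b1c1, b1c2, b1c3, Rt, S1, T1]

/-- Small base words. -/
def ll1 : List (List ℕ) := [
  [], [0], [0, 0], [1], [0, 1], [1, 0], [2], [0, 1, 0], [0, 2], [1, 1], [2, 0], [3], [0, 1, 1],
  [0, 2, 0], [1, 1, 0], [1, 2], [2, 1], [3, 0], [0, 1, 1, 0], [0, 1, 2], [0, 2, 1], [1, 1, 1],
  [1, 2, 0], [2, 1, 0], [2, 2], [3, 1], [0, 1, 1, 1], [0, 1, 2, 0], [0, 2, 1, 0], [1, 1, 1, 0],
  [1, 1, 2], [1, 2, 1], [2, 1, 1], [3, 1, 0], [0, 1, 1, 1, 0], [0, 1, 1, 2], [0, 1, 2, 1],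
  [0, 2, 1, 1], [1, 1, 1, 1], [1, 1, 2, 0], [1, 2, 1, 0], [2, 1, 1, 0], [2, 1, 2], [3, 1, 1],
  [0, 1, 1, 1, 1], [0, 1, 1, 2, 0], [0, 1, 2, 1, 0], [0, 2, 1, 1, 0], [1, 1, 1, 1, 0], [1, 1, 1, 2],
  [1, 1, 2, 1], [1, 2, 1, 1], [2, 1, 1, 1], [3, 1, 1, 0]]

lemma ll1_base : ∀ w ∈ ll1, base1 w = true := by decide

lemma ll1_nodup : ll1.Nodup := by decide

lemma W_words {y : ℝ} (hy : 0 ≤ y) (P : Set (List ℕ)) (l : List (List ℕ)) (hl : l.Nodup)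
    (h : ∀ w ∈ l, w ∈ P) : ENNReal.ofReal (l.map (fun w => y ^ wt w)).sum ≤ W y (enc '' P) := by
  have := W_ge_list hy (X := enc '' P) (l.map enc) (hl.map enc_injective) (by
    intro u hu
    obtain ⟨w, hw, rfl⟩ := List.mem_map.mp hu
    exact ⟨w, h w hw, rfl⟩)
  simpa only [List.map_map, Function.comp_def, enc_length] using this

lemma ll1_W {y : ℝ} (hy : 0 ≤ y) : ENNReal.ofReal (1 * y ^ 1 + 1 * y ^ 2 + 2 * y ^ 3 + 3 * y ^ 4 + 5 * y ^ 5 + 6 * y ^ 6 + 8 * y ^ 7 + 8 * y ^ 8 + 10 * y ^ 9 + 10 * y ^ 10) ≤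
    W y (enc '' {w | base1 w = true}) := by
  refine le_trans (le_of_eq ?_) (W_words hy _ ll1 ll1_nodup ll1_base)
  congr 1
  simp only [ll1, wt, List.map_cons, List.map_nil, List.sum_cons, List.sum_nil]
  ring

lemma W_un {y : ℝ} {X Y : Set (List ℕ)} {a b : ℝ} (ha : 0 ≤ a) (hb : 0 ≤ b)
    (hX : W y X ≤ ENNReal.ofReal a) (hY : W y Y ≤ ENNReal.ofReal b) : W y (X ∪ Y) ≤ ENNReal.ofReal (a + b) :=
  W_le_of_union (le_refl _) ha hb hX hY

lemma W_r1 {y : ℝ} (hy : 0 < y) (hy1 : y < 1) (f : ℕ → List ℕ) (c : ℕ) (hf : ∀ a, wt (f a) = c + 2 * a) :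
    W y (Set.range fun a => enc (f a)) ≤ ENNReal.ofReal (y ^ c / (1 - y ^ 2)) :=
  W_fam hy hy1 (fun a => enc (f a)) c (by rintro u ⟨a, rfl⟩; exact ⟨a, rfl⟩) (fun a => by rw [enc_length, hf])

lemma W_r2 {y : ℝ} (hy : 0 < y) (hy1 : y < 1) (f : ℕ → ℕ → List ℕ) (c : ℕ)
    (hf : ∀ a b, wt (f a b) = c + 2 * a + 2 * b) :
    W y (Set.range fun p : ℕ × ℕ => enc (f p.1 p.2)) ≤ ENNReal.ofReal (y ^ c / (1 - y ^ 2) ^ 2) :=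
  W_fam2 hy hy1 (fun a b => enc (f a b)) c (by rintro u ⟨⟨a, b⟩, rfl⟩; exact ⟨a, b, rfl⟩)
    (fun a b => by rw [enc_length, hf])

lemma base1_W {y : ℝ} (hy : 0 < y) (hy1 : y ≤ 0.42499) : W y (enc '' {w | base1 w = true}) ≤ 1 := by
  have h1 : y < 1 := by linarith
  have h2 : 0 < 1 - y ^ 2 := by nlinarith
  have hsub : enc '' {w | base1 w = true} ⊆
      (Set.range fun a => enc (on a [])) ∪ ((Set.range fun a => enc (on a [0])) ∪
      ((Set.range fun a => enc (0 :: 1 :: on a [])) ∪ ((Set.range fun a => enc (0 :: on a [0])) ∪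
      ((Set.range fun a => enc (3 :: on a [])) ∪ ((Set.range fun a => enc (3 :: on a [0])) ∪
      ((Set.range fun a => enc (2 :: on a [2])) ∪
      ((Set.range fun p : ℕ × ℕ => enc (on p.1 (2 :: on p.2 []))) ∪
      ((Set.range fun p : ℕ × ℕ => enc (on p.1 (2 :: on p.2 [0]))) ∪
      ((Set.range fun p : ℕ × ℕ => enc (0 :: on p.1 (2 :: on p.2 []))) ∪
      (Set.range fun p : ℕ × ℕ => enc (0 :: on p.1 (2 :: on p.2 [0]))))))))))))  := by
    rintro u ⟨w, hw, rfl⟩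
    simp only [Set.mem_union, Set.mem_range, enc_injective.eq_iff, Prod.exists]
    rcases base1_shape w hw with ⟨a, h⟩ | ⟨a, b, h⟩
    · rcases h with h | h | h | h | h | h | h
      · exact Or.inl ⟨a, h.symm⟩
      · exact Or.inr (Or.inl ⟨a, h.symm⟩)
      · exact Or.inr (Or.inr (Or.inl ⟨a, h.symm⟩))
      · exact Or.inr (Or.inr (Or.inr (Or.inl ⟨a, h.symm⟩)))
      · exact Or.inr (Or.inr (Or.inr (Or.inr (Or.inl ⟨a, h.symm⟩))))
      · exact Or.inr (Or.inr (Or.inr (Or.inr (Or.inr (Or.inl ⟨a, h.symm⟩)))))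
      · exact Or.inr (Or.inr (Or.inr (Or.inr (Or.inr (Or.inr (Or.inl ⟨a, h.symm⟩))))))
    · iterate 7 right
      rcases h with h | h | h | h
      · exact Or.inl ⟨a, b, h.symm⟩
      · exact Or.inr (Or.inl ⟨a, b, h.symm⟩)
      · exact Or.inr (Or.inr (Or.inl ⟨a, b, h.symm⟩))
      · exact Or.inr (Or.inr (Or.inr ⟨a, b, h.symm⟩))
  have key := (W_mono y hsub).trans
    (W_un (by positivity) (by positivity) (W_r1 hy h1 (fun a => on a []) 1 (by intro a; simp [wt_on, wt]; omega))
    (W_un (by positivity) (by positivity) (W_r1 hy h1 (fun a => on a [0]) 2 (by intro a; simp [wt_on, wt]; omega))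
    (W_un (by positivity) (by positivity) (W_r1 hy h1 (fun a => 0 :: 1 :: on a []) 4 (by intro a; simp [wt_on, wt]; omega))
    (W_un (by positivity) (by positivity) (W_r1 hy h1 (fun a => 0 :: on a [0]) 3 (by intro a; simp [wt_on, wt]; omega))
    (W_un (by positivity) (by positivity) (W_r1 hy h1 (fun a => 3 :: on a []) 5 (by intro a; simp [wt_on, wt]; omega))
    (W_un (by positivity) (by positivity) (W_r1 hy h1 (fun a => 3 :: on a [0]) 6 (by intro a; simp [wt_on, wt]; omega))
    (W_un (by positivity) (by positivity) (W_r1 hy h1 (fun a => 2 :: on a [2]) 7 (by intro a; simp [wt_on, wt]; omega))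
    (W_un (by positivity) (by positivity)
      (W_r2 hy h1 (fun a b => on a (2 :: on b [])) 4 (by intro a b; simp [wt_on, wt]; omega))
    (W_un (by positivity) (by positivity)
      (W_r2 hy h1 (fun a b => on a (2 :: on b [0])) 5 (by intro a b; simp [wt_on, wt]; omega))
    (W_un (by positivity) (by positivity)
      (W_r2 hy h1 (fun a b => 0 :: on a (2 :: on b [])) 5 (by intro a b; simp [wt_on, wt]; omega))
      (W_r2 hy h1 (fun a b => 0 :: on a (2 :: on b [0])) 6 (by intro a b; simp [wt_on, wt]; omega))))))))))))
  refine key.trans ?_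
  rw [← ENNReal.ofReal_one]
  apply ENNReal.ofReal_le_ofReal
  have t1 : ∀ c : ℕ, y ^ c / (1 - y ^ 2) ≤ 0.42499 ^ c / (1 - 0.42499 ^ 2) := by
    intro c; gcongr
  have t2 : ∀ c : ℕ, y ^ c / (1 - y ^ 2) ^ 2 ≤ 0.42499 ^ c / (1 - 0.42499 ^ 2) ^ 2 := by
    intro c; gcongr
  have := t1 1; have := t1 2; have := t1 3; have := t1 4; have := t1 5; have := t1 6; have := t1 7
  have := t2 4; have := t2 5; have := t2 6
  norm_num at *
  linarith

theorem app1 (y : ℝ) (hy0 : 0.42123 ≤ y) (hy1 : y ≤ 0.42499) : GR (1 / y) := by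
  have hy : 0 < y := by linarith
  have hlt : y < 1 := by linarith
  have h2 : 0 < 1 - y ^ 2 := by nlinarith
  have hy2 : y ^ 2 < 1 := by linarith
  set T : ℕ → ℝ := fun e => (3 * y ^ 8 + 4 * y ^ 9) * (y ^ 2) ^ e / (1 - y ^ 2) with hT
  have hTs : ∀ e, T e = (3 * y ^ 8 + 4 * y ^ 9) * (y ^ 2) ^ e + T (e + 1) := by
    intro e; simp only [hT]; field_simp; ring
  have hc : 1 - y ^ 2 ≤ y ^ 2 * (3 + 4 * y) := by nlinarith
  have hTb : ∀ e, y ^ 8 * (y ^ 2) ^ e ≤ T (e + 1) := by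
    intro e
    simp only [hT]
    rw [le_div_iff₀ h2]
    have : 0 ≤ y ^ 8 * (y ^ 2) ^ e := by positivity
    have e2 := mul_le_mul_of_nonneg_left hc this
    refine e2.trans (le_of_eq ?_)
    ring
  have hT0 : y ^ 6 ≤ T 0 := by
    simp only [hT]
    rw [le_div_iff₀ h2]
    have : 0 ≤ y ^ 6 := by positivity
    nlinarith
  refine block_GR y hy (enc '' {w | base1 w = true}) (fun k => (bw1 k).map enc) ?_ ?_ ⟨[], rfl, rfl⟩ ?_ ?_ ?_ ?_ ?_
    (fun k => match k with | 0 => 2 * y ^ 6 + 5 * y ^ 7 + T 0 | e + 1 => T e) ?_ ?_ ?_ (base1_W hy hy1) ?_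
  · rintro u ⟨w, _, rfl⟩; exact enc_Ind w
  · intro k u hu
    obtain ⟨w, _, rfl⟩ := List.mem_map.mp hu
    exact enc_Ind w
  · rintro u ⟨w, hw, rfl⟩ v hv
    exact enc_del (D := enc '' {w | base1 w = true}) (Q := fun w => base1 w = true) (fun k hk => ⟨k, hk, rfl⟩) rfl
      (base1_closed w hw).1 (base1_closed w hw).2 v hv
  · intro k p u s h v hv
    exact Gd_spec (bw1 k) (fun w => base1 w = true) rfl (bw1_closed k) p u s h v hv
  · intro k; exact (bw1_nodup k).map enc_injective
  · intro k k' u hu hu'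
    obtain ⟨w, hw, rfl⟩ := List.mem_map.mp hu
    obtain ⟨w', hw', h⟩ := List.mem_map.mp hu'
    have e1 := bw1_wt k w hw
    have e2 := bw1_wt k' w' hw'
    rw [h] at e2
    omega
  · rintro k u hu ⟨w, hw, rfl⟩
    obtain ⟨w', hw', h⟩ := List.mem_map.mp hu
    rw [enc_injective.eq_iff] at h
    subst h
    have := bw1_base k w' hw'
    simp only [Set.mem_ofPred_eq] at hw
    rw [hw] at this
    cases this
  · intro k u hu
    have e1 : u.length / 2 = k + 3 := by
      obtain ⟨w, hw, rfl⟩ := List.mem_map.mp hu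
      exact bw1_wt k w hw
    have e2 : y ^ u.length ≤ y ^ (2 * (k + 3)) := pow_le_pow_of_le_one hy.le hlt.le (by omega)
    refine e2.trans ?_
    cases k with
    | zero => exact hT0
    | succ e =>
      have : y ^ (2 * (e + 1 + 3)) = y ^ 8 * (y ^ 2) ^ e := by ring
      rw [this]; exact hTb e
  · intro k
    cases k with
    | zero =>
      simp only [bw1, List.map_cons, List.map_nil, List.sum_cons, List.sum_nil, enc_length, wt]
      apply le_of_eq; ring
    | succ e =>
      simp only [bw1, List.map_cons, List.map_nil, List.sum_cons, List.sum_nil, enc_length, wt, wt_on]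
      rw [hTs e]
      apply le_of_eq; ring
  · rw [← tendsto_add_atTop_iff_nat 1]
    have := ((tendsto_pow_atTop_nhds_zero_of_lt_one (by positivity) hy2).const_mul (3 * y ^ 8 + 4 * y ^ 9)).div_const
      (1 - y ^ 2)
    simpa [hT] using this
  · refine le_trans ?_ (add_le_add_left (ll1_W hy.le) _)
    rw [← ENNReal.ofReal_add (by positivity) (by positivity), ← ENNReal.ofReal_one]
    apply ENNReal.ofReal_le_ofReal
    have t0 : ∀ c : ℕ, (0.42123 : ℝ) ^ c ≤ y ^ c := by intro c; gcongr
    have t1 : (3 * (0.42123 : ℝ) ^ 8 + 4 * 0.42123 ^ 9) * (0.42123 ^ 2) ^ 0 / (1 - 0.42123 ^ 2) ≤ T 0 := by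
      simp only [hT, pow_zero]; gcongr
    have := t0 2; have := t0 3; have := t0 4; have := t0 5; have := t0 6; have := t0 7
    have := t0 8; have := t0 9; have := t0 10
    simp only []
    refine le_trans ?_ (add_le_add_right (add_le_add_right t1 _) _)
    norm_num at *
    linarith

/-! ### Oscillation-like families for the larger intervals -/

/-- `1^a 2` or `1^a 2 0`. -/
def RL : List ℕ → Bool
  | 1 :: r => RL r
  | [2] => true
  | [2, 0] => true
  | _ => false

/-- `1^a 0 0` or `1^a 0 1`. -/
def RU : List ℕ → Bool
  | 1 :: r => RU r
  | [0, 0] => true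
  | [0, 1] => true
  | _ => false

/-- `0 r` with `r` in `Rt`. -/
def Z0 : List ℕ → Bool
  | 0 :: r => Rt r
  | _ => false

/-- Base words. -/
def bJ (up : Bool) : List ℕ → Bool
  | [] => true
  | 0 :: r => Rt r || RL r || (up && RU r) || Z0 r
  | 1 :: r => Rt r || RL r || (up && RU r)
  | 2 :: r => Rt r
  | _ => false

@[simp] lemma RL_on (e : ℕ) (s : List ℕ) : RL (on e s) = RL s := by
  induction e with
  | zero => rfl
  | succ e ih => simpa [on, RL] using ih

@[simp] lemma RU_on (e : ℕ) (s : List ℕ) : RU (on e s) = RU s := by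
  induction e with
  | zero => rfl
  | succ e ih => simpa [on, RU] using ih

lemma RL_shape (w : List ℕ) (h : RL w = true) : ∃ a, w = on a [2] ∨ w = on a [2, 0] := by
  induction w with
  | nil => simp [RL] at h
  | cons x r ih =>
    rcases x with _ | _ | _ | x
    · simp [RL] at h
    · obtain ⟨a, h | h⟩ := ih (by simpa [RL] using h)
      · exact ⟨a + 1, Or.inl (by simp [on, h])⟩
      · exact ⟨a + 1, Or.inr (by simp [on, h])⟩
    · rcases r with _ | ⟨_ | z, _ | ⟨t, r⟩⟩
      · exact ⟨0, Or.inl rfl⟩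
      · exact ⟨0, Or.inr rfl⟩
      · simp [RL] at h
      · simp [RL] at h
      · simp [RL] at h
    · simp [RL] at h

lemma RU_shape (w : List ℕ) (h : RU w = true) : ∃ a, w = on a [0, 0] ∨ w = on a [0, 1] := by
  induction w with
  | nil => simp [RU] at h
  | cons x r ih =>
    rcases x with _ | _ | x
    · rcases r with _ | ⟨_ | _ | z, _ | ⟨t, r⟩⟩
      · simp [RU] at h
      · exact ⟨0, Or.inl rfl⟩
      · simp [RU] at h
      · exact ⟨0, Or.inr rfl⟩
      · simp [RU] at h
      · simp [RU] at h
      · simp [RU] at h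
    · obtain ⟨a, h | h⟩ := ih (by simpa [RU] using h)
      · exact ⟨a + 1, Or.inl (by simp [on, h])⟩
      · exact ⟨a + 1, Or.inr (by simp [on, h])⟩
    · simp [RU] at h

lemma bJnil (up : Bool) : bJ up [] = true := rfl
lemma bJc0 (up : Bool) (r : List ℕ) : bJ up (0 :: r) = (Rt r || RL r || (up && RU r) || Z0 r) := rfl
lemma bJc1 (up : Bool) (r : List ℕ) : bJ up (1 :: r) = (Rt r || RL r || (up && RU r)) := rfl
lemma bJc2 (up : Bool) (r : List ℕ) : bJ up (2 :: r) = Rt r := rfl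
lemma bJc3 (up : Bool) (r : List ℕ) : bJ up (3 :: r) = false := rfl

lemma bJ_on_nil (up : Bool) (e : ℕ) : bJ up (on e []) = true := by
  cases e <;> simp [on, bJ, Rt]
lemma bJ_on_0 (up : Bool) (e : ℕ) : bJ up (on e [0]) = true := by
  cases e <;> simp [on, bJ, Rt]
lemma bJ_on_1 (up : Bool) (e : ℕ) : bJ up (on e [1]) = true := by
  cases e <;> simp [on, bJ, Rt]
lemma bJ_on_10 (up : Bool) (e : ℕ) : bJ up (on e [1, 0]) = true := by
  cases e <;> simp [on, bJ, Rt]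
lemma bJ_on_2 (up : Bool) (e : ℕ) : bJ up (on e [2]) = true := by
  cases e <;> simp [on, bJ, Rt, RL]
lemma bJ_on_20 (up : Bool) (e : ℕ) : bJ up (on e [2, 0]) = true := by
  cases e <;> simp [on, bJ, Rt, RL]
lemma bJ_on_00 (e : ℕ) : bJ true (on e [0, 0]) = true := by
  cases e <;> simp [on, bJ, Rt, RU]
lemma bJ_on_01 (e : ℕ) : bJ true (on e [0, 1]) = true := by
  cases e <;> simp [on, bJ, Rt, RU]

lemma bJ_shape (up : Bool) (w : List ℕ) (h : bJ up w = true) : ∃ a,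
    (w = on a [] ∨ w = on a [0] ∨ w = 0 :: 1 :: on a [] ∨ w = 0 :: on a [0] ∨ w = 0 :: 0 :: 1 :: on a [] ∨
    w = 0 :: 0 :: on a [0] ∨ w = 2 :: on a [] ∨ w = 2 :: on a [0] ∨ w = 1 :: on a [2] ∨ w = 1 :: on a [2, 0] ∨
    w = 0 :: on a [2] ∨ w = 0 :: on a [2, 0]) ∨
    (up = true ∧ (w = 1 :: on a [0, 0] ∨ w = 1 :: on a [0, 1] ∨ w = 0 :: 1 :: on a [0, 0] ∨
      w = 0 :: 1 :: on a [0, 1])) := by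
  rcases w with _ | ⟨x, r⟩
  · exact ⟨0, by simp [on]⟩
  rcases x with _ | _ | _ | x
  · simp only [bJ, Bool.or_eq_true, Bool.and_eq_true] at h
    rcases h with ((h | h) | h) | h
    · obtain ⟨a, rfl | rfl⟩ := Rt_shape r h
      · rcases a with _ | a
        · exact ⟨0, by simp [on]⟩
        · exact ⟨a, by simp [on]⟩
      · exact ⟨a, by simp⟩
    · obtain ⟨a, rfl | rfl⟩ := RL_shape r h
      · exact ⟨a, by simp⟩
      · exact ⟨a, by simp⟩
    · obtain ⟨a, rfl | rfl⟩ := RU_shape r h.2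
      · rcases a with _ | a
        · exact ⟨0, by simp [on]⟩
        · exact ⟨a, by simp [on, h.1]⟩
      · rcases a with _ | a
        · exact ⟨0, by simp [on]⟩
        · exact ⟨a, by simp [on, h.1]⟩
    · rcases r with _ | ⟨_ | z, r⟩
      · simp [Z0] at h
      · obtain ⟨a, rfl | rfl⟩ := Rt_shape r h
        · rcases a with _ | a
          · exact ⟨0, by simp [on]⟩
          · exact ⟨a, by simp [on]⟩
        · exact ⟨a, by simp⟩
      · simp [Z0] at h
  · simp only [zero_add, bJ, Bool.or_eq_true, Bool.and_eq_true] at h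
    rcases h with (h | h) | h
    · obtain ⟨a, rfl | rfl⟩ := Rt_shape r h
      · exact ⟨a + 1, by simp [on]⟩
      · exact ⟨a + 1, by simp [on]⟩
    · obtain ⟨a, rfl | rfl⟩ := RL_shape r h
      · exact ⟨a, by simp⟩
      · exact ⟨a, by simp⟩
    · obtain ⟨a, rfl | rfl⟩ := RU_shape r h.2
      · exact ⟨a, by simp [h.1]⟩
      · exact ⟨a, by simp [h.1]⟩
  · simp only [zero_add, Nat.reduceAdd, bJ] at h
    obtain ⟨a, rfl | rfl⟩ := Rt_shape r h
    · exact ⟨a, by simp⟩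
    · exact ⟨a, by simp⟩
  · simp [bJ] at h

lemma bJ_closed (up : Bool) (w : List ℕ) (h : bJ up w = true) :
    AK (fun w => bJ up w = true) w ∧ AD (fun w => bJ up w = true) w := by
  obtain ⟨a, (rfl | rfl | rfl | rfl | rfl | rfl | rfl | rfl | rfl | rfl | rfl | rfl) |
    ⟨rfl, (rfl | rfl | rfl | rfl)⟩⟩ := bJ_shape up w h <;>
  simp [AK, AD, AK_on_iff, AD_on_iff, bJnil, bJc0, bJc1, bJc2, bJ_on_nil, bJ_on_0,
    bJ_on_2, bJ_on_20, bJ_on_00, bJ_on_01, Rt, RL, RU, Z0]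

/-- Corner words. -/
def pre (b : ℕ) (s : List ℕ) : List ℕ := if b % 2 = 0 then 0 :: 0 :: on (b / 2) s else 2 :: on (b / 2) s

lemma pre_even (e : ℕ) (s : List ℕ) : pre (2 * e) s = 0 :: 0 :: on e s := by simp [pre]
lemma pre_odd (e : ℕ) (s : List ℕ) : pre (2 * e + 1) s = 2 :: on e s := by
  have h1 : (2 * e + 1) / 2 = e := by omega
  simp [pre, h1]

lemma wt_pre (b : ℕ) (s : List ℕ) : wt (pre b s) = b + 2 + wt s := by
  obtain ⟨e, rfl | rfl⟩ := Nat.even_or_odd' b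
  · rw [pre_even]; simp [wt, wt_on]; omega
  · rw [pre_odd]; simp [wt, wt_on]; omega

/-- Lower words. -/
def lc : ℕ → List ℕ → List ℕ
  | 0, t => 3 :: t
  | b + 1, t => pre b (2 :: t)

/-- Blocks of words. -/
def bwJ (up : Bool) (b : ℕ) : List (List ℕ) :=
  if up then [lc b [], pre b [0, 0], lc b [0], pre b [0, 1]] else [lc b [], lc b [0]]

lemma bwJ_closed (up : Bool) (b : ℕ) : Gd (fun w => bJ up w = true) (bwJ up b) := by
  have hb : b = 0 ∨ (∃ e, b = 2 * e + 1) ∨ ∃ e, b = 2 * e + 1 + 1 := by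
    obtain ⟨e, rfl | rfl⟩ := Nat.even_or_odd' b
    · rcases e with _ | e
      · left; rfl
      · right; right; exact ⟨e, by ring⟩
    · right; left; exact ⟨e, rfl⟩
  have hp : ∀ e s, pre (2 * e + 1 + 1) s = 0 :: 0 :: on (e + 1) s := fun e s => by
    rw [← pre_even (e + 1)]; rfl
  have hp0 : ∀ s, pre 0 s = 0 :: 0 :: on 0 s := pre_even 0
  rcases hb with rfl | ⟨e, rfl⟩ | ⟨e, rfl⟩ <;> cases up <;>
  simp [bwJ, lc, hp, hp0, pre_even, pre_odd, Gd, AK, AD, AK_on_iff, AD_on_iff, bJnil, bJc0, bJc1, bJc2,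
    bJ_on_2, bJ_on_20, bJ_on_00, bJ_on_01, Rt, RL, RU, Z0]

/-- Index helper. -/
def gx : List ℕ → ℕ
  | 1 :: r => gx r + 2
  | 2 :: _ => 1
  | _ => 0

/-- The block containing a word. -/
def idx : List ℕ → ℕ
  | 0 :: 0 :: r => gx r
  | 2 :: r => gx r + 1
  | _ => 0

lemma gx_on (e : ℕ) (s : List ℕ) : gx (on e s) = 2 * e + gx s := by
  induction e with
  | zero => simp [on]
  | succ e ih => simp only [on, gx, ih]; omega

lemma idx_pre (b : ℕ) (s : List ℕ) : idx (pre b s) = b + gx s := by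
  obtain ⟨e, rfl | rfl⟩ := Nat.even_or_odd' b
  · rw [pre_even]; simp only [idx, gx_on]
  · rw [pre_odd]; simp only [idx, gx_on]; omega

lemma idx_lc (b : ℕ) (t : List ℕ) : idx (lc b t) = b := by
  cases b with
  | zero => rfl
  | succ b => simp only [lc, idx_pre, gx]

lemma wt_lc (b : ℕ) (t : List ℕ) : wt (lc b t) = b + 4 + wt t := by
  cases b with
  | zero => simp [lc, wt]
  | succ b => simp only [lc, wt_pre, wt]; omega

lemma bwJ_idx (up : Bool) (b : ℕ) : ∀ w ∈ bwJ up b, idx w = b := by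
  cases up <;> simp [bwJ, idx_lc, idx_pre, gx]

lemma bwJ_wt (up : Bool) (b : ℕ) : ∀ w ∈ bwJ up b, b + 5 ≤ wt w := by
  cases up <;> simp [bwJ, wt_lc, wt_pre, wt]

lemma on_inj_right (e : ℕ) {s s' : List ℕ} (h : on e s = on e s') : s = s' := by
  induction e with
  | zero => exact h
  | succ e ih => simp only [on, List.cons.injEq, true_and] at h; exact ih h

lemma pre_inj {b : ℕ} {s s' : List ℕ} (h : pre b s = pre b s') : s = s' := by
  obtain ⟨e, rfl | rfl⟩ := Nat.even_or_odd' b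
  · rw [pre_even, pre_even] at h; simp only [List.cons.injEq, true_and] at h; exact on_inj_right e h
  · rw [pre_odd, pre_odd] at h; simp only [List.cons.injEq, true_and] at h; exact on_inj_right e h

lemma pre_succ_ne (b : ℕ) (s s' : List ℕ) : pre b s ≠ pre (b + 1) s' := by
  rcases Nat.mod_two_eq_zero_or_one b with h | h
  · have h' : (b + 1) % 2 = 1 := by omega
    simp [pre, h, h']
  · have h' : (b + 1) % 2 = 0 := by omega
    simp [pre, h, h']

lemma lc_ne (b : ℕ) (s s' : List ℕ) : lc b s ≠ pre b s' := by
  cases b with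
  | zero => simp [lc, pre]
  | succ b => exact pre_succ_ne b _ _

lemma lc_inj {b : ℕ} {s s' : List ℕ} (h : lc b s = lc b s') : s = s' := by
  cases b with
  | zero => simpa [lc] using h
  | succ b => simpa using pre_inj h

lemma bwJ_nodup (up : Bool) (b : ℕ) : (bwJ up b).Nodup := by
  have h1 : lc b [] ≠ lc b [0] := fun h => by simpa using lc_inj h
  have h2 : pre b [0, 0] ≠ pre b [0, 1] := fun h => by simpa using pre_inj h
  cases up
  · simp [bwJ, h1]
  · simp [bwJ, h1, h2, lc_ne, (lc_ne _ _ _).symm]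

lemma RU_aux (n x : ℕ) (s : List ℕ) : RU (0 :: 1 :: on n (x :: s)) = false := by
  cases n <;> simp [on, RU]

lemma bwJ_base (up : Bool) (b : ℕ) : ∀ w ∈ bwJ up b, bJ up w = false := by
  have h1 : ∀ e s, bJ up (pre e (2 :: s)) = false := by
    intro b s
    obtain ⟨e, rfl | rfl⟩ := Nat.even_or_odd' b
    · rw [pre_even]; cases e <;> simp [on, bJ, Rt, RL, RU, Z0, RU_aux]
    · rw [pre_odd]; simp [bJc2, Rt]
  have h2 : ∀ s, s ≠ [] → bJ up (pre b (0 :: s)) = false := by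
    intro s hs
    obtain ⟨z, s, rfl⟩ := List.exists_cons_of_ne_nil hs
    obtain ⟨e, rfl | rfl⟩ := Nat.even_or_odd' b
    · rw [pre_even]; cases e <;> simp [on, bJ, Rt, RL, RU, Z0, RU_aux]
    · rw [pre_odd]; simp [bJc2, Rt]
  have h3 : ∀ s, bJ up (lc b s) = false := by
    intro s
    cases b with
    | zero => rfl
    | succ b => exact h1 b s
  cases up <;> simp [bwJ, h3, h2]

lemma W_fams {y : ℝ} (hy : 0 < y) (hy1 : y < 1) (F : List ((ℕ → List ℕ) × ℕ)) :
    (∀ p ∈ F, ∀ a, wt (p.1 a) = p.2 + 2 * a) →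
    ∀ X : Set (List ℕ), (∀ w ∈ X, ∃ p ∈ F, ∃ a, w = p.1 a) →
    W y (enc '' X) ≤ ENNReal.ofReal ((F.map fun p => y ^ p.2 / (1 - y ^ 2)).sum) := by
  have h2 : 0 < 1 - y ^ 2 := by nlinarith
  induction F with
  | nil =>
    intro _ X hX
    have : X = ∅ := by
      ext w
      simp only [Set.mem_empty_iff_false, iff_false]
      intro hw
      simpa using hX w hw
    subst this
    simp [W]
  | cons p F ih =>
    intro hF X hX
    simp only [List.map_cons, List.sum_cons]
    refine W_le_of_union (X := Set.range fun a => enc (p.1 a)) (Y := enc '' {w | ∃ p ∈ F, ∃ a, w = p.1 a}) ?_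
      (by positivity) ?_ (W_r1 hy hy1 p.1 p.2 (hF p (by simp))) (ih (fun q hq => hF q (by simp [hq])) _ (fun w hw => hw))
    · rintro u ⟨w, hw, rfl⟩
      obtain ⟨q, hq, a, rfl⟩ := hX w hw
      rcases List.mem_cons.mp hq with rfl | hq
      · exact Or.inl ⟨a, rfl⟩
      · exact Or.inr ⟨_, ⟨q, hq, a, rfl⟩, rfl⟩
    · apply List.sum_nonneg
      intro x hx
      obtain ⟨q, _, rfl⟩ := List.mem_map.mp hx
      positivity

/-- Lower families. -/
def FL : List ((ℕ → List ℕ) × ℕ) := [(fun a => on a [], 1), (fun a => on a [0], 2), (fun a => 0 :: 1 :: on a [], 4),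
  (fun a => 0 :: on a [0], 3), (fun a => 0 :: 0 :: 1 :: on a [], 5), (fun a => 0 :: 0 :: on a [0], 4),
  (fun a => 2 :: on a [], 4), (fun a => 2 :: on a [0], 5), (fun a => 1 :: on a [2], 6), (fun a => 1 :: on a [2, 0], 7),
  (fun a => 0 :: on a [2], 5), (fun a => 0 :: on a [2, 0], 6)]

/-- Upper families. -/
def FU : List ((ℕ → List ℕ) × ℕ) := [(fun a => 1 :: on a [0, 0], 5), (fun a => 1 :: on a [0, 1], 6),
  (fun a => 0 :: 1 :: on a [0, 0], 6), (fun a => 0 :: 1 :: on a [0, 1], 7)]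

lemma FL_wt : ∀ p ∈ FL, ∀ a, wt (p.1 a) = p.2 + 2 * a := by
  simp only [FL, List.mem_cons, List.not_mem_nil, or_false, forall_eq_or_imp, forall_eq, wt, wt_on]
  refine ⟨?_, ?_, ?_, ?_, ?_, ?_, ?_, ?_, ?_, ?_, ?_, ?_⟩ <;> intro a <;> omega

lemma FU_wt : ∀ p ∈ FU, ∀ a, wt (p.1 a) = p.2 + 2 * a := by
  simp only [FU, List.mem_cons, List.not_mem_nil, or_false, forall_eq_or_imp, forall_eq, wt, wt_on]
  refine ⟨?_, ?_, ?_, ?_⟩ <;> intro a <;> omega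

lemma bJ_W_false {y : ℝ} (hy : 0 < y) (hy1 : y < 1) : W y (enc '' {w | bJ false w = true}) ≤
    ENNReal.ofReal ((y + y ^ 2 + y ^ 3 + 3 * y ^ 4 + 3 * y ^ 5 + 2 * y ^ 6 + y ^ 7) / (1 - y ^ 2)) := by
  refine (W_fams hy hy1 FL FL_wt {w | bJ false w = true} ?_).trans (le_of_eq ?_)
  · intro w hw
    obtain ⟨a, h⟩ := bJ_shape false w hw
    simp only [Bool.false_eq_true, false_and, or_false] at h
    simp only [FL, List.mem_cons, List.not_mem_nil, or_false, exists_eq_or_imp, exists_eq_left, ← exists_or]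
    exact ⟨a, h⟩
  · congr 1
    simp only [FL, List.map_cons, List.map_nil, List.sum_cons, List.sum_nil]
    ring

lemma bJ_W_true {y : ℝ} (hy : 0 < y) (hy1 : y < 1) : W y (enc '' {w | bJ true w = true}) ≤
    ENNReal.ofReal ((y + y ^ 2 + y ^ 3 + 3 * y ^ 4 + 4 * y ^ 5 + 4 * y ^ 6 + 2 * y ^ 7) / (1 - y ^ 2)) := by
  refine (W_fams hy hy1 (FL ++ FU) (by
    intro p hp
    rcases List.mem_append.mp hp with h | h
    · exact FL_wt p h
    · exact FU_wt p h) {w | bJ true w = true} ?_).trans (le_of_eq ?_)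
  · intro w hw
    obtain ⟨a, h⟩ := bJ_shape true w hw
    simp only [true_and, or_assoc] at h
    simp only [FL, FU, List.cons_append, List.nil_append, List.mem_cons, List.not_mem_nil, or_false, exists_eq_or_imp,
      exists_eq_left, ← exists_or]
    exact ⟨a, h⟩
  · congr 1
    simp only [FL, FU, List.cons_append, List.nil_append, List.map_cons, List.map_nil, List.sum_cons, List.sum_nil]
    ring

/-- Small base words, lower case. -/
def ll2 : List (List ℕ) := [
  [], [0], [0, 0], [1], [0, 0, 0], [0, 1], [1, 0], [2], [0, 0, 1], [0, 1, 0], [0, 2], [1, 1], [2, 0],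
  [0, 0, 1, 0], [0, 1, 1], [0, 2, 0], [1, 1, 0], [1, 2], [2, 1], [0, 0, 1, 1], [0, 1, 1, 0], [0, 1, 2],
  [1, 1, 1], [1, 2, 0], [2, 1, 0], [0, 0, 1, 1, 0], [0, 1, 1, 1], [0, 1, 2, 0], [1, 1, 1, 0],
  [1, 1, 2], [2, 1, 1]]

/-- Small base words, two-sided case. -/
def ll3 : List (List ℕ) := [
  [], [0], [0, 0], [1], [0, 0, 0], [0, 1], [1, 0], [2], [0, 0, 1], [0, 1, 0], [0, 2], [1, 0, 0],
  [1, 1], [2, 0], [0, 0, 1, 0], [0, 1, 0, 0], [0, 1, 1], [0, 2, 0], [1, 0, 1], [1, 1, 0], [1, 2],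
  [2, 1], [0, 0, 1, 1], [0, 1, 0, 1], [0, 1, 1, 0], [0, 1, 2], [1, 1, 0, 0], [1, 1, 1], [1, 2, 0],
  [2, 1, 0], [0, 0, 1, 1, 0], [0, 1, 1, 0, 0], [0, 1, 1, 1], [0, 1, 2, 0], [1, 1, 0, 1], [1, 1, 1, 0],
  [1, 1, 2], [2, 1, 1], [0, 0, 1, 1, 1], [0, 1, 1, 0, 1], [0, 1, 1, 1, 0], [0, 1, 1, 2],
  [1, 1, 1, 0, 0], [1, 1, 1, 1], [1, 1, 2, 0], [2, 1, 1, 0]]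

lemma ll2_W {y : ℝ} (hy : 0 ≤ y) : ENNReal.ofReal (1 * y ^ 1 + 1 * y ^ 2 + 2 * y ^ 3 + 4 * y ^ 4 + 5 * y ^ 5 + 6 * y ^ 6 + 6 * y ^ 7 + 6 * y ^ 8) ≤
    W y (enc '' {w | bJ false w = true}) := by
  have h1 : ∀ w ∈ ll2, bJ false w = true := by decide
  have h2 : ll2.Nodup := by decide
  refine le_trans (le_of_eq ?_) (W_words hy _ ll2 h2 h1)
  congr 1
  simp only [ll2, wt, List.map_cons, List.map_nil, List.sum_cons, List.sum_nil]
  ring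

lemma ll3_W {y : ℝ} (hy : 0 ≤ y) : ENNReal.ofReal (1 * y ^ 1 + 1 * y ^ 2 + 2 * y ^ 3 + 4 * y ^ 4 + 6 * y ^ 5 + 8 * y ^ 6 + 8 * y ^ 7 + 8 * y ^ 8 + 8 * y ^ 9) ≤
    W y (enc '' {w | bJ true w = true}) := by
  have h1 : ∀ w ∈ ll3, bJ true w = true := by decide
  have h2 : ll3.Nodup := by decide
  refine le_trans (le_of_eq ?_) (W_words hy _ ll3 h2 h1)
  congr 1
  simp only [ll3, wt, List.map_cons, List.map_nil, List.sum_cons, List.sum_nil]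
  ring

/-- Number of words per length in the blocks, halved. -/
def nu (up : Bool) : ℝ := if up then 2 else 1

theorem appJ (y : ℝ) (hy : 0 < y) (hlt : y < 1) (up : Bool) (E : Set (List ℕ)) (L0 : List (List ℕ)) (b0 : ℕ)
    (hE : ∀ u ∈ E, Ind u) (hL : ∀ u ∈ L0, Ind u)
    (hcE : ∀ u ∈ E, ∀ v, Del1 u v → v ∈ PS (enc '' {w | bJ up w = true} ∪ E))
    (hcL : ∀ u ∈ L0, ∀ v, Del1 u v → v ∈ PS (enc '' {w | bJ up w = true} ∪ E))
    (hnd : L0.Nodup) (hdis : ∀ u ∈ L0, u ∉ enc '' {w | bJ up w = true} ∪ E)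
    (hlen : ∀ u ∈ L0, u.length = b0 + 4) (hlE : ∀ u ∈ E, u.length < b0 + 5)
    (hc : 1 - y ≤ nu up * (1 + y) * y)
    (hW : W y (enc '' {w | bJ up w = true} ∪ E) ≤ 1)
    (hW2 : 1 ≤ W y (enc '' {w | bJ up w = true} ∪ E) + ENNReal.ofReal ((L0.map (fun u => y ^ u.length)).sum +
      nu up * (1 + y) * y ^ (5 + b0) / (1 - y))) : GR (1 / y) := by
  have h1 : 0 < 1 - y := by linarith
  have hnu : 0 < nu up := by cases up <;> simp [nu]
  set T : ℕ → ℝ := fun e => nu up * (1 + y) * y ^ (5 + b0 + e) / (1 - y) with hT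
  have hTs : ∀ e, T e = nu up * (1 + y) * y ^ (5 + b0 + e) + T (e + 1) := by
    intro e; simp only [hT, ← add_assoc, pow_succ]; field_simp; ring
  have hTb : ∀ e, y ^ (4 + b0 + e) ≤ T e := by
    intro e
    simp only [hT]
    rw [le_div_iff₀ h1]
    have h3 : 0 ≤ y ^ (4 + b0 + e) := by positivity
    have e2 := mul_le_mul_of_nonneg_left hc h3
    refine e2.trans (le_of_eq ?_)
    ring
  refine block_GR y hy (enc '' {w | bJ up w = true} ∪ E)
    (fun k => match k with | 0 => L0 | j + 1 => (bwJ up (b0 + j)).map enc) ?_ ?_ (Or.inl ⟨[], rfl, rfl⟩) ?_ ?_ ?_ ?_ ?_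
    (fun k => match k with | 0 => (L0.map (fun u => y ^ u.length)).sum + T 0 | e + 1 => T e) ?_ ?_ ?_ hW hW2
  · rintro u (⟨w, _, rfl⟩ | hu)
    · exact enc_Ind w
    · exact hE u hu
  · intro k u hu
    rcases k with _ | k
    · exact hL u hu
    · obtain ⟨w, _, rfl⟩ := List.mem_map.mp hu
      exact enc_Ind w
  · rintro u (⟨w, hw, rfl⟩ | hu) v hv
    · exact enc_del (Q := fun w => bJ up w = true) (fun k hk => Or.inl ⟨k, hk, rfl⟩) rfl
        (bJ_closed up w hw).1 (bJ_closed up w hw).2 v hv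
    · exact hcE u hu v hv
  · intro k p u s h v hv
    rcases k with _ | k
    · exact PS_mono Set.subset_union_left (hcL u (by rw [show L0 = _ from h]; simp) v hv)
    · refine PS_mono ?_ (Gd_spec (bwJ up (b0 + k)) (fun w => bJ up w = true) rfl (bwJ_closed up _) p u s h v hv)
      rintro x (hx | hx)
      · exact Or.inl (Or.inl hx)
      · exact Or.inr hx
  · intro k
    rcases k with _ | k
    · exact hnd
    · exact (bwJ_nodup up _).map enc_injective
  · have hl : ∀ j, ∀ u ∈ (bwJ up (b0 + j)).map enc, b0 + 5 ≤ u.length := by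
      intro j u hu
      obtain ⟨w, hw, rfl⟩ := List.mem_map.mp hu
      rw [enc_length]
      have := bwJ_wt up _ w hw
      omega
    intro k k' u hu hu'
    rcases k with _ | k <;> rcases k' with _ | k'
    · rfl
    · have := hlen u hu
      have := hl k' u hu'
      omega
    · have := hlen u hu'
      have := hl k u hu
      omega
    · obtain ⟨w, hw, rfl⟩ := List.mem_map.mp hu
      obtain ⟨w', hw', h⟩ := List.mem_map.mp hu'
      rw [enc_injective.eq_iff] at h
      subst h
      have e1 := bwJ_idx up _ w' hw
      have e2 := bwJ_idx up _ w' hw'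
      omega
  · intro k u hu
    rcases k with _ | k
    · exact hdis u hu
    · obtain ⟨w, hw, rfl⟩ := List.mem_map.mp hu
      rintro (⟨w', hw', h⟩ | h)
      · rw [enc_injective.eq_iff] at h
        subst h
        have := bwJ_base up _ w' hw
        rw [show bJ up w' = true from hw'] at this
        cases this
      · have h3 := hlE _ h
        rw [enc_length] at h3
        have := bwJ_wt up _ w hw
        omega
  · intro k u hu
    have e1 : 4 + b0 + k ≤ u.length := by
      rcases k with _ | k
      · have := hlen u hu; omega
      · obtain ⟨w, hw, rfl⟩ := List.mem_map.mp hu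
        have := bwJ_wt up _ w hw
        rw [enc_length]
        omega
    exact (pow_le_pow_of_le_one hy.le hlt.le e1).trans (hTb k)
  · intro k
    rcases k with _ | k
    · exact le_rfl
    · change T k ≤ (((bwJ up (b0 + k)).map enc).map (fun u => y ^ u.length)).sum + T (k + 1)
      rw [hTs k]
      apply le_of_eq
      cases up
      · simp [bwJ, enc_length, wt_lc, wt, nu]; ring
      · simp [bwJ, enc_length, wt_lc, wt_pre, wt, nu]; ring
  · rw [← tendsto_add_atTop_iff_nat 1]
    have := ((tendsto_pow_atTop_nhds_zero_of_lt_one hy.le hlt).const_mul (nu up * (1 + y) * y ^ (5 + b0))).div_const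
      (1 - y)
    rw [mul_zero, zero_div] at this
    refine this.congr fun e => ?_
    simp only [hT, pow_add]
    ring

lemma c2_nin (w : List ℕ) : enc w ≠ [0, 0, 2, 2] := by
  intro h
  rcases w with _ | ⟨_ | _ | b, r⟩
  · simp [enc, bl] at h
  · simp [enc, bl] at h
  · rcases r with _ | ⟨_ | c, r⟩ <;> simp [enc, bl, List.replicate_succ] at h
  · simp [enc, bl, List.replicate_succ] at h

lemma c2_Ind : Ind [0, 0, 2, 2] := by
  refine ⟨by simp, by simp [Valid, VA], ?_⟩
  intro a b h ha hb
  rcases a with _ | ⟨_, _ | ⟨_, _ | ⟨_, _ | ⟨_, a⟩⟩⟩⟩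
  · simp at ha
  · simp at h; rw [← h.2]; simp [Valid, VA]
  · simp at h; rw [← h.2.2]; simp [Valid, VA]
  · simp at h; rw [← h.2.2.2]; simp [Valid, VA]
  · simp at h; exact absurd h.2.2.2.2.2 hb

lemma c2_del (v : List ℕ) (h : Del1 [0, 0, 2, 2] v) : v = enc [0, 0] ∨ v = enc [1] := by
  obtain ⟨A, x, R, h1, rfl⟩ := h
  rcases A with _ | ⟨_, _ | ⟨_, _ | ⟨_, _ | ⟨_, a⟩⟩⟩⟩
  · simp at h1; obtain ⟨rfl, rfl⟩ := h1; left; decide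
  · simp at h1; obtain ⟨rfl, rfl, rfl⟩ := h1; left; decide
  · simp at h1; obtain ⟨rfl, rfl, rfl, rfl⟩ := h1; right; decide
  · simp at h1; obtain ⟨rfl, rfl, rfl, rfl, rfl⟩ := h1; right; decide
  · simp at h1

lemma appJ0 (y : ℝ) (hy : 0 < y) (hlt : y < 1) (up : Bool)
    (hc : 1 - y ≤ nu up * (1 + y) * y)
    (hW : W y (enc '' {w | bJ up w = true}) ≤ 1)
    (hW2 : 1 ≤ W y (enc '' {w | bJ up w = true}) + ENNReal.ofReal (y ^ 4 +
      nu up * (1 + y) * y ^ 5 / (1 - y))) : GR (1 / y) := by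
  have hu : enc '' {w | bJ up w = true} ∪ ∅ = enc '' {w | bJ up w = true} := Set.union_empty _
  refine appJ y hy hlt up ∅ [[0, 0, 2, 2]] 0 (by simp) ?_ (by simp) ?_ (by simp) ?_ (by simp) (by simp) hc ?_ ?_
  · intro u hu; simp only [List.mem_singleton] at hu; subst hu; exact c2_Ind
  · intro u hu v hv
    simp only [List.mem_singleton] at hu; subst hu
    apply PS_of_mem
    rcases c2_del v hv with rfl | rfl
    · exact Or.inl ⟨_, by simp [bJ, Rt], rfl⟩
    · exact Or.inl ⟨_, by simp [bJ, Rt], rfl⟩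
  · intro u hu
    simp only [List.mem_singleton] at hu; subst hu
    rintro (⟨w, _, h⟩ | h)
    · exact c2_nin w h
    · exact h
  · rw [hu]; exact hW
  · rw [hu]; simpa using hW2

theorem app2 (y : ℝ) (hy0 : 1 / 2.41 ≤ y) (hy1 : y ≤ 0.42124) : GR (1 / y) := by
  have hy : 0 < y := lt_of_lt_of_le (by norm_num) hy0
  have hlt : y < 1 := by linarith
  have h1 : 0 < 1 - y := by linarith
  have hg : (0.4149 : ℝ) ≤ y := le_trans (by norm_num) hy0
  refine appJ0 y hy hlt false ?_ ?_ ?_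
  · simp only [nu]; norm_num; nlinarith
  · refine (bJ_W_false hy hlt).trans ?_
    rw [← ENNReal.ofReal_one]
    apply ENNReal.ofReal_le_ofReal
    have : (y + y ^ 2 + y ^ 3 + 3 * y ^ 4 + 3 * y ^ 5 + 2 * y ^ 6 + y ^ 7) / (1 - y ^ 2) ≤
      (0.42124 + 0.42124 ^ 2 + 0.42124 ^ 3 + 3 * 0.42124 ^ 4 + 3 * 0.42124 ^ 5 + 2 * 0.42124 ^ 6 + 0.42124 ^ 7) /
        (1 - 0.42124 ^ 2) := by
      gcongr
    refine this.trans (by norm_num)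
  · refine le_trans ?_ (add_le_add_left (ll2_W hy.le) _)
    have hn : 0 ≤ nu false := by simp [nu]
    rw [← ENNReal.ofReal_add (by positivity) (by positivity), ← ENNReal.ofReal_one]
    apply ENNReal.ofReal_le_ofReal
    simp only [nu, Bool.false_eq_true, if_false]
    have t : (1 * 0.4149 ^ 1 + 1 * 0.4149 ^ 2 + 2 * 0.4149 ^ 3 + 4 * 0.4149 ^ 4 + 5 * 0.4149 ^ 5 + 6 * 0.4149 ^ 6 +
        6 * 0.4149 ^ 7 + 6 * 0.4149 ^ 8 + (0.4149 ^ 4 + 1 * (1 + 0.4149) * 0.4149 ^ 5 / (1 - 0.4149)) : ℝ) ≤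
        1 * y ^ 1 + 1 * y ^ 2 + 2 * y ^ 3 + 4 * y ^ 4 + 5 * y ^ 5 + 6 * y ^ 6 +
        6 * y ^ 7 + 6 * y ^ 8 + (y ^ 4 + 1 * (1 + y) * y ^ 5 / (1 - y)) := by
      gcongr
    refine le_trans ?_ t
    norm_num

theorem app3 (y : ℝ) (hy0 : 0.40404 ≤ y) (hy1 : y ≤ 0.41494) : GR (1 / y) := by
  have hy : 0 < y := lt_of_lt_of_le (by norm_num) hy0
  have hlt : y < 1 := by linarith
  have h1 : 0 < 1 - y := by linarith
  refine appJ0 y hy hlt true ?_ ?_ ?_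
  · simp only [nu]; norm_num; nlinarith
  · refine (bJ_W_true hy hlt).trans ?_
    rw [← ENNReal.ofReal_one]
    apply ENNReal.ofReal_le_ofReal
    have : (y + y ^ 2 + y ^ 3 + 3 * y ^ 4 + 4 * y ^ 5 + 4 * y ^ 6 + 2 * y ^ 7) / (1 - y ^ 2) ≤
      (0.41494 + 0.41494 ^ 2 + 0.41494 ^ 3 + 3 * 0.41494 ^ 4 + 4 * 0.41494 ^ 5 + 4 * 0.41494 ^ 6 + 2 * 0.41494 ^ 7) /
        (1 - 0.41494 ^ 2) := by
      gcongr
    refine this.trans (by norm_num)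
  · refine le_trans ?_ (add_le_add_left (ll3_W hy.le) _)
    have hn : 0 ≤ nu true := by simp [nu]
    rw [← ENNReal.ofReal_add (by positivity) (by positivity), ← ENNReal.ofReal_one]
    apply ENNReal.ofReal_le_ofReal
    simp only [nu, if_true]
    have t : (1 * 0.40404 ^ 1 + 1 * 0.40404 ^ 2 + 2 * 0.40404 ^ 3 + 4 * 0.40404 ^ 4 + 6 * 0.40404 ^ 5 + 8 * 0.40404 ^ 6 +
        8 * 0.40404 ^ 7 + 8 * 0.40404 ^ 8 + 8 * 0.40404 ^ 9 +
        (0.40404 ^ 4 + 2 * (1 + 0.40404) * 0.40404 ^ 5 / (1 - 0.40404)) : ℝ) ≤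
        1 * y ^ 1 + 1 * y ^ 2 + 2 * y ^ 3 + 4 * y ^ 4 + 6 * y ^ 5 + 8 * y ^ 6 +
        8 * y ^ 7 + 8 * y ^ 8 + 8 * y ^ 9 + (y ^ 4 + 2 * (1 + y) * y ^ 5 / (1 - y)) := by
      gcongr
    refine le_trans ?_ t
    norm_num

lemma VA_dl (l : List ℕ) : ∀ {k t : ℕ}, t ≤ k → VA (k + 1) l → VA k (dl t l) := by
  induction l with
  | nil => intros; trivial
  | cons c cs ih =>
    intro k t ht h
    rw [dl]
    split_ifs with h1
    · exact ⟨by have := h.1; omega, ih (by omega) h.2⟩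
    · exact ⟨by omega, ih (by omega) h.2⟩

lemma Del1_valid {u v : List ℕ} (hu : Valid u) (h : Del1 u v) : Valid v ∧ v.length + 1 = u.length := by
  obtain ⟨A, x, R, rfl, rfl⟩ := h
  have h1 := (VA_append A (x :: R) 0).mp hu
  refine ⟨(VA_append A _ 0).mpr ⟨h1.1, VA_dl R h1.2.1 h1.2.2⟩, ?_⟩
  simp [dl_length]
  omega

lemma valid_PS (n : ℕ) : ∀ l : List ℕ, l.length ≤ n → Valid l → l ∈ PS {u | Ind u ∧ u.length ≤ n} := by
  suffices h : ∀ m, m ≤ n → ∀ l : List ℕ, l.length ≤ m → Valid l → l ∈ PS {u | Ind u ∧ u.length ≤ n} from h n le_rfl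
  intro m
  induction m with
  | zero =>
    intro _ l hl _
    have : l = [] := List.length_eq_zero_iff.mp (by omega)
    subst this
    exact PS_nil _
  | succ m ih =>
    intro hm l hl hv
    by_cases h0 : l = []
    · subst h0; exact PS_nil _
    by_cases hI : Ind l
    · exact PS_of_mem ⟨hI, by omega⟩
    · unfold Ind at hI
      push Not at hI
      obtain ⟨a, b, rfl, ha, hb, hvb⟩ := hI h0 hv
      have la := List.length_pos_iff.mpr ha
      have lb := List.length_pos_iff.mpr hb
      rw [List.length_append] at hl
      exact PS_append (ih (by omega) a (by omega) hv.left) (ih (by omega) b (by omega) hvb)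

lemma snoc_Ind (l : List ℕ) (hv : Valid l) : Ind (l ++ [l.length]) := by
  refine ⟨by simp, (VA_append l _ 0).mpr ⟨hv, by simp [VA]⟩, ?_⟩
  intro a b h ha hb hvb
  have hb' : b = b.dropLast ++ [l.length] := by
    have h1 : b.getLast hb = l.length := by
      have : (a ++ b).getLast (by simp [hb]) = l.length := by
        simp only [← h]; simp
      rw [← this, List.getLast_append_of_ne_nil _ hb]
    conv_lhs => rw [← List.dropLast_append_getLast hb, h1]
  rw [hb'] at hvb
  have h2 := ((VA_append _ _ 0).mp hvb).2.1
  have h3 := congrArg List.length h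
  have la := List.length_pos_iff.mpr ha
  have lb := List.length_pos_iff.mpr hb
  simp at h2 h3
  omega

lemma small_Ind (u : List ℕ) (h : Ind u) (hl : u.length < 4) : u ∈ enc '' {w | bJ true w = true} ∨ u = [0, 1, 2] := by
  obtain ⟨h0, hv, hs⟩ := h
  rcases u with _ | ⟨a, _ | ⟨b, _ | ⟨c, _ | ⟨d, u⟩⟩⟩⟩
  · exact absurd rfl h0
  · simp [Valid, VA] at hv; subst hv; left; exact ⟨[], rfl, rfl⟩
  · simp [Valid, VA] at hv
    have h1 := hs [a] [b] rfl (by simp) (by simp)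
    simp [Valid, VA] at h1
    obtain ⟨rfl, h2⟩ := hv
    obtain rfl : b = 1 := by omega
    left; exact ⟨[0], rfl, rfl⟩
  · simp [Valid, VA] at hv
    have h1 := hs [a] [b, c] rfl (by simp) (by simp)
    have h2 := hs [a, b] [c] rfl (by simp) (by simp)
    simp [Valid, VA] at h1 h2
    obtain ⟨rfl, h3, h4⟩ := hv
    rcases b with _ | _ | b
    · have := h1 rfl
      obtain rfl : c = 2 := by omega
      left; exact ⟨[1], rfl, rfl⟩
    · have h5 : c = 1 ∨ c = 2 := by omega
      rcases h5 with rfl | rfl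
      · left; exact ⟨[0, 0], rfl, rfl⟩
      · right; rfl
    · omega
  · simp at hl; omega

/-- Base set for the last interval. -/
def Am (m : ℕ) : Set (List ℕ) := enc '' {w | bJ true w = true} ∪ {u | Ind u ∧ u.length < m}

lemma Am_four {y : ℝ} (hy : 0 < y) (hy1 : y ≤ 0.40405) : W y (Am 4) ≤ 1 := by
  have hlt : y < 1 := by linarith
  have h2 : 0 < 1 - y ^ 2 := by nlinarith
  have key : W y (Am 4) ≤ ENNReal.ofReal ((y + y ^ 2 + y ^ 3 + 3 * y ^ 4 + 4 * y ^ 5 + 4 * y ^ 6 + 2 * y ^ 7) / (1 - y ^ 2)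
      + y ^ 3) := by
    refine W_le_of_union (X := enc '' {w | bJ true w = true}) (Y := {u | u ∈ [[0, 1, 2]]}) ?_ (by positivity)
      (by positivity) (bJ_W_true hy hlt) ?_
    · rintro u (hu | hu)
      · exact Or.inl hu
      · rcases small_Ind u hu.1 hu.2 with h | h
        · exact Or.inl h
        · right; simp [h]
    · rw [W_list y hy.le [[0, 1, 2]] (by simp)]
      simp
  refine key.trans ?_
  rw [← ENNReal.ofReal_one]
  apply ENNReal.ofReal_le_ofReal
  have : (y + y ^ 2 + y ^ 3 + 3 * y ^ 4 + 4 * y ^ 5 + 4 * y ^ 6 + 2 * y ^ 7) / (1 - y ^ 2) + y ^ 3 ≤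
      (0.40405 + 0.40405 ^ 2 + 0.40405 ^ 3 + 3 * 0.40405 ^ 4 + 4 * 0.40405 ^ 5 + 4 * 0.40405 ^ 6 + 2 * 0.40405 ^ 7) /
        (1 - 0.40405 ^ 2) + 0.40405 ^ 3 := by
    gcongr
  refine this.trans (by norm_num)

lemma Am_large {y : ℝ} (hy : 0 < y) : ∃ m, 1 < W y (Am m) := by
  have h1 := FloorSemiring.tendsto_pow_div_factorial_atTop (1 / y)
  obtain ⟨n, hn⟩ := (h1.eventually (gt_mem_nhds hy)).exists
  refine ⟨n + 2, ?_⟩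
  have hf := (card_VL n).1
  let l : List (List ℕ) := hf.toFinset.toList.map (fun u => u ++ [n])
  have hmem : ∀ u ∈ l, ∃ v, Valid v ∧ v.length = n ∧ u = v ++ [n] := by
    intro u hu
    obtain ⟨v, hv, rfl⟩ := List.mem_map.mp hu
    rw [Finset.mem_toList, Set.Finite.mem_toFinset] at hv
    exact ⟨v, hv.1, hv.2, rfl⟩
  have hl : l.Nodup := by
    refine List.Nodup.map ?_ (Finset.nodup_toList _)
    intro a b h
    simpa using h
  have hge := W_ge_list hy.le (X := Am (n + 2)) l hl (by
    intro u hu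
    obtain ⟨v, hv, hvl, rfl⟩ := hmem u hu
    refine Or.inr ⟨?_, by simp [hvl]⟩
    have := snoc_Ind v hv
    rwa [hvl] at this)
  refine lt_of_lt_of_le ?_ hge
  have hs : (l.map (fun u => y ^ u.length)) = List.replicate (n.factorial) (y ^ (n + 1)) := by
    rw [List.eq_replicate_iff]
    refine ⟨?_, ?_⟩
    · simp only [l, List.length_map, Finset.length_toList]
      rw [← (card_VL n).2, Set.ncard_eq_toFinset_card _ hf]
    · intro b hb
      obtain ⟨u, hu, rfl⟩ := List.mem_map.mp hb
      obtain ⟨v, hv, hvl, rfl⟩ := hmem u hu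
      simp [hvl]
  rw [hs, List.sum_replicate, nsmul_eq_mul, ← ENNReal.ofReal_one]
  have hfac : (0 : ℝ) < n.factorial := by exact_mod_cast n.factorial_pos
  rw [ENNReal.ofReal_lt_ofReal_iff (by positivity)]
  rw [div_lt_iff₀ hfac, one_div, inv_pow, inv_lt_iff_one_lt_mul₀ (by positivity)] at hn
  calc (1 : ℝ) < _ := hn
    _ = _ := by ring

theorem app4 (y : ℝ) (hy0 : 1 / 3.5 ≤ y) (hy1 : y ≤ 0.40405) : GR (1 / y) := by
  have hy : 0 < y := lt_of_lt_of_le (by norm_num) hy0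
  have hlt : y < 1 := by linarith
  have hm : ∃ j, 1 < W y (Am (4 + j)) := by
    obtain ⟨m, hm⟩ := Am_large hy
    refine ⟨m, lt_of_lt_of_le hm (W_mono y ?_)⟩
    rintro u (hu | hu)
    · exact Or.inl hu
    · exact Or.inr ⟨hu.1, by have := hu.2; omega⟩
  classical
  obtain ⟨b0, hb1, hb2⟩ : ∃ b0, W y (Am (4 + b0)) ≤ 1 ∧ 1 < W y (Am (4 + (b0 + 1))) := by
    have hs := Nat.find_spec hm
    have hmin := fun j => Nat.find_min hm (m := j)
    rcases hk : Nat.find hm with _ | k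
    · rw [hk] at hs
      exact absurd (Am_four hy hy1) (not_le.mpr hs)
    · rw [hk] at hs hmin
      exact ⟨k, not_lt.mp (hmin k (by omega)), hs⟩
  set E : Set (List ℕ) := {u | Ind u ∧ u.length < 4 + b0} with hE
  have hfin : {u : List ℕ | Ind u ∧ u.length = 4 + b0 ∧ u ∉ enc '' {w | bJ true w = true}}.Finite :=
    (card_VL (4 + b0)).1.subset (fun u hu => ⟨hu.1.2.1, hu.2.1⟩)
  have hmem : ∀ u, u ∈ hfin.toFinset.toList ↔
      (Ind u ∧ u.length = 4 + b0 ∧ u ∉ enc '' {w | bJ true w = true}) := by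
    intro u
    rw [Finset.mem_toList, Set.Finite.mem_toFinset]
    rfl
  have hcl : ∀ u, Ind u → u.length ≤ 4 + b0 → ∀ v, Del1 u v → v ∈ PS (enc '' {w | bJ true w = true} ∪ E) := by
    intro u hu hl v hv
    obtain ⟨h1, h2⟩ := Del1_valid hu.2.1 hv
    refine PS_mono ?_ (valid_PS v.length v le_rfl h1)
    intro x hx
    exact Or.inr ⟨hx.1, by have := hx.2; omega⟩
  refine appJ y hy hlt true E hfin.toFinset.toList b0 (fun u hu => hu.1) (fun u hu => ((hmem u).mp hu).1)
    (fun u hu => hcl u hu.1 hu.2.le) (fun u hu => hcl u ((hmem u).mp hu).1 ((hmem u).mp hu).2.1.le)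
    (Finset.nodup_toList _) ?_ (fun u hu => by rw [((hmem u).mp hu).2.1]; ring) (fun u hu => by have := hu.2; omega)
    ?_ hb1 ?_
  · intro u hu
    obtain ⟨h1, h2, h3⟩ := (hmem u).mp hu
    rintro (h | h)
    · exact h3 h
    · have := h.2
      omega
  · simp only [nu, if_true]
    have : (0.285 : ℝ) ≤ y := le_trans (by norm_num) hy0
    nlinarith
  · refine hb2.le.trans ?_
    have hsub : Am (4 + (b0 + 1)) ⊆ (enc '' {w | bJ true w = true} ∪ E) ∪ {u | u ∈ hfin.toFinset.toList} := by
      rintro u (hu | hu)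
      · exact Or.inl (Or.inl hu)
      · by_cases h1 : u ∈ enc '' {w | bJ true w = true}
        · exact Or.inl (Or.inl h1)
        by_cases h2 : u.length < 4 + b0
        · exact Or.inl (Or.inr ⟨hu.1, h2⟩)
        · exact Or.inr ((hmem u).mpr ⟨hu.1, by have := hu.2; omega, h1⟩)
    refine (W_mono y hsub).trans ((W_union_le y _ _).trans ?_)
    gcongr
    rw [W_list y hy.le _ (Finset.nodup_toList _)]
    apply ENNReal.ofReal_le_ofReal
    have h1 : 0 < 1 - y := by linarith
    have : 0 ≤ nu true * (1 + y) * y ^ (5 + b0) / (1 - y) := by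
      have : (0 : ℝ) ≤ nu true := by simp [nu]
      positivity
    linarith

lemma GR_base (γ : ℝ) (h1 : 2.353 ≤ γ) (h2 : γ ≤ 3.5) : GR γ := by
  have hγ : 0 < γ := by linarith
  have hup : ∀ a : ℝ, 0 < a → a ≤ γ → 1 / γ ≤ 1 / a := fun a ha h => one_div_le_one_div_of_le ha h
  have hlo : ∀ a : ℝ, γ ≤ a → 1 / a ≤ 1 / γ := fun a h => one_div_le_one_div_of_le hγ h
  rw [← one_div_one_div γ]
  rcases le_total γ 2.37395 with h | h
  · exact app1 _ (le_trans (by norm_num) (hlo _ h)) ((hup _ (by norm_num) h1).trans (by norm_num))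
  rcases le_total γ 2.41 with h' | h'
  · exact app2 _ (hlo _ h') ((hup _ (by norm_num) h).trans (by norm_num))
  rcases le_total γ 2.475 with h'' | h''
  · exact app3 _ (le_trans (by norm_num) (hlo _ h'')) ((hup _ (by norm_num) h').trans (by norm_num))
  · exact app4 _ (hlo _ h2) ((hup _ (by norm_num) h'').trans (by norm_num))

lemma GR_all (n : ℕ) : ∀ γ : ℝ, 2.353 ≤ γ → γ ≤ 3.5 + n → GR γ := by
  induction n with
  | zero => intro γ h1 h2; exact GR_base γ h1 (by simpa using h2)
  | succ n ih =>
    intro γ h1 h2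
    push_cast at h2
    rcases le_total γ 3.5 with h | h
    · exact GR_base γ h1 h
    · have := GR_add_one (γ - 1) (by linarith) (ih (γ - 1) (by linarith) (by linarith))
      simpa using this

theorem every_rate_above_lambda_is_growth_rate (lam : ℝ) (hpos : 0 < lam)
    (hlam : ∀ x : ℝ, 0 < x →
      (x ^ 8 - 2 * x ^ 7 - x ^ 5 - x ^ 4 - 2 * x ^ 3 - 2 * x ^ 2 - x - 1 = 0 ↔ x = lam)) :
    ∀ γ : ℝ, lam ≤ γ →
      ∃ C : ∀ n : ℕ, Set (Equiv.Perm (Fin n)), IsPermClass C ∧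
        Tendsto (fun n : ℕ => (Nat.card ↥(C n) : ℝ) ^ (1 / (n : ℝ))) atTop (nhds γ) := by
  intro γ hγ
  have hl : 2.353 ≤ lam := by
    have hcont : ContinuousOn (fun x : ℝ => x ^ 8 - 2 * x ^ 7 - x ^ 5 - x ^ 4 - 2 * x ^ 3 - 2 * x ^ 2 - x - 1)
        (Set.Icc 2.353 3) := by fun_prop
    have hiv := intermediate_value_Icc (by norm_num : (2.353 : ℝ) ≤ 3) hcont
    obtain ⟨x, hx, hx0⟩ := hiv (show (0 : ℝ) ∈ Set.Icc _ _ from ⟨by norm_num, by norm_num⟩)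
    have := (hlam x (by linarith [hx.1])).mp hx0
    rw [← this]
    exact hx.1
  obtain ⟨n, hn⟩ := exists_nat_ge γ
  exact GR_final γ (by linarith) (GR_all n γ (hl.trans hγ) (by linarith))
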